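/- arXiv:1609.02068 — 5 statements merged into one kernel-verified Lean document; each statement's English description precedes it below -/
import Mathlib

section
/- For every real number γ > 0 one has ∫₀¹ η_γ(t)/(t(1−t)) dt = π²(1+γ)/(6γ). In particular, for γ = 1 this gives ∫₀¹ (−t·log t − (1−t)·log(1−t))/(t(1−t)) dt = π²/3. -/
/-!
The substitution `t = sigmoid x` has `dt = t * (1 - t) dx`, and entropy is symmetric under
`t ↦ 1 - t`, so the integral equals twice that of `η_γ (sigmoid x)` over `x > 0`. With
`L x = -log (sigmoid x) = log (1 + exp (-x))`, one has
`η_γ (sigmoid x) = (L (γ * x) - γ * L x) / (1 - γ)` for `γ ≠ 1` and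
`η_1 (sigmoid x) = L x - x * L' x`. Everything thus reduces to `∫ x > 0, L x = π ^ 2 / 12`, the
second case by integration by parts. Since `L x = ℓ x - ℓ (2 * x)` for `ℓ x = -log (1 - exp (-x))`,
this follows from `∫ x > 0, ℓ x = ∑ n ≥ 1, 1 / n ^ 2 = π ^ 2 / 6`, by expanding `ℓ` in powers of
`exp (-x)`.
-/

open MeasureTheory Real

/-- The γ-Rényi entropy function: for γ ≠ 1, `η_γ(t) = (1-γ)⁻¹ log(t^γ + (1-t)^γ)` on (0,1)
and 0 outside; for γ = 1 it is the von Neumann entropy function. -/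
noncomputable def renyiEntropy (γ : ℝ) (t : ℝ) : ℝ :=
  if 0 < t ∧ t < 1 then
    if γ = 1 then -t * Real.log t - (1 - t) * Real.log (1 - t)
    else (1 - γ)⁻¹ * Real.log (t ^ γ + (1 - t) ^ γ)
  else 0

open Set Filter Topology

section SigmoidSubstitution

lemma intervalIntegral_zero_one_eq_integral_sigmoid {E : Type*} [NormedAddCommGroup E]
    [NormedSpace ℝ E] (f : ℝ → E) :
    ∫ t in (0 : ℝ)..1, f t = ∫ x, (sigmoid x * (1 - sigmoid x)) • f (sigmoid x) := by
  rw [intervalIntegral.integral_of_le zero_le_one, integral_Ioc_eq_integral_Ioo, ← range_sigmoid,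
    ← image_univ, integral_image_eq_integral_deriv_smul_of_monotoneOn MeasurableSet.univ
      (fun x _ ↦ (hasDerivAt_sigmoid x).hasDerivWithinAt) (sigmoid_monotone.monotoneOn _),
    setIntegral_univ]

lemma intervalIntegral_div_mul_one_sub_eq_integral_sigmoid (f : ℝ → ℝ) :
    ∫ t in (0 : ℝ)..1, f t / (t * (1 - t)) = ∫ x, f (sigmoid x) := by
  rw [intervalIntegral_zero_one_eq_integral_sigmoid]
  congr with x
  exact mul_div_cancel₀ _ (mul_pos (sigmoid_pos x) (sub_pos.2 (sigmoid_lt_one x))).ne'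

lemma intervalIntegral_div_mul_one_sub_eq_two_mul_integral_sigmoid {f : ℝ → ℝ}
    (hf : ∀ t, f (1 - t) = f t) :
    ∫ t in (0 : ℝ)..1, f t / (t * (1 - t)) = 2 * ∫ x in Ioi 0, f (sigmoid x) := by
  have f_sigmoid_abs (x : ℝ) : f (sigmoid |x|) = f (sigmoid x) := by
    rcases abs_choice x with h | h <;> simp only [h, sigmoid_neg, hf]
  rw [intervalIntegral_div_mul_one_sub_eq_integral_sigmoid,
    ← integral_comp_abs (f := fun x ↦ f (sigmoid x))]
  simp only [f_sigmoid_abs]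

end SigmoidSubstitution

section LogSigmoidIntegrals

lemma hasSum_one_div_nat_add_one_sq : HasSum (fun n : ℕ ↦ 1 / ((n : ℝ) + 1) ^ 2) (π ^ 2 / 6) := by
  simpa using (hasSum_nat_add_iff' 1).2 hasSum_zeta_two

lemma hasSum_neg_log_one_sub_exp_neg {x : ℝ} (hx : 0 < x) :
    HasSum (fun n : ℕ ↦ exp (-((n + 1) * x)) / (n + 1)) (-log (1 - exp (-x))) := by
  have exp_lt_one : |exp (-x)| < 1 := by simpa [abs_of_pos (exp_pos _)] using hx
  convert! hasSum_pow_div_log_of_abs_lt_one exp_lt_one using 3 with n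
  rw [← exp_nat_mul]
  push_cast
  ring_nf

variable {b : ℝ}

lemma integral_neg_log_one_sub_exp_neg_mul (hb : 0 < b) :
    ∫ x in Ioi 0, -log (1 - exp (-(b * x))) = π ^ 2 / (6 * b) := by
  let summand (n : ℕ) (x : ℝ) : ℝ := exp (-((n + 1) * (b * x))) / (n + 1)
  have summand_eq (n : ℕ) : summand n = fun x ↦ exp (-((n + 1) * b) * x) / (n + 1) := by
    ext x
    simp only [summand, neg_mul, mul_assoc]
  have integrable_summand (n : ℕ) : IntegrableOn (summand n) (Ioi 0) := by
    rw [summand_eq]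
    exact (exp_neg_integrableOn_Ioi 0 (by positivity)).div_const _
  have integral_summand (n : ℕ) : ∫ x in Ioi 0, summand n x = b⁻¹ * (1 / ((n : ℝ) + 1) ^ 2) := by
    have rate_pos : 0 < ((n : ℝ) + 1) * b := by positivity
    rw [summand_eq, integral_div, integral_exp_mul_Ioi (neg_lt_zero.2 rate_pos), mul_zero, exp_zero]
    field_simp
  have norm_summand (n : ℕ) (x : ℝ) : ‖summand n x‖ = summand n x := norm_of_nonneg (by positivity)
  have hasSum_integrals := hasSum_one_div_nat_add_one_sq.mul_left b⁻¹
  calc ∫ x in Ioi 0, -log (1 - exp (-(b * x)))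
      = ∫ x in Ioi 0, ∑' n, summand n x := setIntegral_congr_fun measurableSet_Ioi fun x hx ↦
        (hasSum_neg_log_one_sub_exp_neg (mul_pos hb hx)).tsum_eq.symm
    _ = ∑' n, ∫ x in Ioi 0, summand n x := by
        refine (integral_tsum_of_summable_integral_norm integrable_summand ?_).symm
        simpa only [norm_summand, integral_summand] using hasSum_integrals.summable
    _ = π ^ 2 / (6 * b) := by
        simp only [integral_summand, hasSum_integrals.tsum_eq]
        field_simp

lemma integrableOn_neg_log_one_sub_exp_neg_mul (hb : 0 < b) :
    IntegrableOn (fun x ↦ -log (1 - exp (-(b * x)))) (Ioi 0) :=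
  .of_integral_ne_zero (by rw [integral_neg_log_one_sub_exp_neg_mul hb]; positivity)

lemma neg_log_sigmoid_eq_neg_log_one_sub_exp_neg_sub {x : ℝ} (hx : x ≠ 0) :
    -log (sigmoid x) = -log (1 - exp (-x)) - -log (1 - exp (-(2 * x))) := by
  have one_sub_ne_zero : 1 - exp (-x) ≠ 0 := sub_ne_zero.2 fun h ↦ hx (by simpa using h.symm)
  have factor : 1 - exp (-(2 * x)) = (1 - exp (-x)) * (1 + exp (-x)) := by
    rw [show -(2 * x) = -x + -x by ring, exp_add]
    ring
  rw [factor, log_mul one_sub_ne_zero (by positivity), sigmoid_def, log_inv]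
  ring

lemma integral_neg_log_sigmoid_mul (hb : 0 < b) :
    ∫ x in Ioi 0, -log (sigmoid (b * x)) = π ^ 2 / (12 * b) := by
  have h2b : 0 < 2 * b := by positivity
  calc ∫ x in Ioi 0, -log (sigmoid (b * x))
      = ∫ x in Ioi 0, (-log (1 - exp (-(b * x))) - -log (1 - exp (-(2 * b * x)))) :=
        setIntegral_congr_fun measurableSet_Ioi fun x hx ↦ by
          simpa only [mul_assoc] using
            neg_log_sigmoid_eq_neg_log_one_sub_exp_neg_sub (mul_pos hb hx).ne'
    _ = π ^ 2 / (6 * b) - π ^ 2 / (6 * (2 * b)) := by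
        rw [integral_sub (integrableOn_neg_log_one_sub_exp_neg_mul hb)
          (integrableOn_neg_log_one_sub_exp_neg_mul h2b),
          integral_neg_log_one_sub_exp_neg_mul hb, integral_neg_log_one_sub_exp_neg_mul h2b]
    _ = π ^ 2 / (12 * b) := by
        field_simp
        norm_num

lemma integrableOn_neg_log_sigmoid_mul (hb : 0 < b) :
    IntegrableOn (fun x ↦ -log (sigmoid (b * x))) (Ioi 0) :=
  .of_integral_ne_zero (by rw [integral_neg_log_sigmoid_mul hb]; positivity)

lemma integral_neg_log_sigmoid : ∫ x in Ioi 0, -log (sigmoid x) = π ^ 2 / 12 := by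
  simpa only [one_mul, mul_one] using integral_neg_log_sigmoid_mul one_pos

lemma integrableOn_neg_log_sigmoid : IntegrableOn (fun x ↦ -log (sigmoid x)) (Ioi 0) := by
  simpa only [one_mul] using integrableOn_neg_log_sigmoid_mul one_pos

lemma neg_log_sigmoid_nonneg (x : ℝ) : 0 ≤ -log (sigmoid x) :=
  neg_nonneg.2 (log_nonpos (sigmoid_nonneg x) (sigmoid_le_one x))

lemma neg_log_sigmoid_le_exp_neg (x : ℝ) : -log (sigmoid x) ≤ exp (-x) := by
  rw [sigmoid_def, log_inv, neg_neg]
  linarith [log_le_sub_one_of_pos (show 0 < 1 + exp (-x) by positivity)]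

lemma hasDerivAt_neg_log_sigmoid (x : ℝ) :
    HasDerivAt (fun y ↦ -log (sigmoid y)) (-sigmoid (-x)) x := by
  convert! ((hasDerivAt_sigmoid x).log (sigmoid_pos x).ne').neg using 1
  rw [sigmoid_neg, mul_div_cancel_left₀ _ (sigmoid_pos x).ne']

lemma sigmoid_neg_le_exp_neg (x : ℝ) : sigmoid (-x) ≤ exp (-x) := by
  rw [← sigmoid_mul_rexp_neg]
  exact mul_le_of_le_one_left (exp_pos _).le (sigmoid_le_one x)

lemma tendsto_mul_exp_neg_atTop : Tendsto (fun x ↦ x * exp (-x)) atTop (𝓝 0) := by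
  simpa only [pow_one] using tendsto_pow_mul_exp_neg_atTop_nhds_zero 1

lemma integrableOn_mul_exp_neg_Ioi : IntegrableOn (fun x ↦ x * exp (-x)) (Ioi 0) := by
  simpa using integrableOn_rpow_mul_exp_neg_rpow (p := 1) (s := 1) (by norm_num) one_pos

lemma integrableOn_mul_sigmoid_neg : IntegrableOn (fun x ↦ x * sigmoid (-x)) (Ioi 0) := by
  refine integrableOn_mul_exp_neg_Ioi.mono' (by fun_prop) ?_
  filter_upwards [ae_restrict_mem measurableSet_Ioi] with x (hx : 0 < x)
  rw [norm_of_nonneg (mul_nonneg hx.le (sigmoid_nonneg _))]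
  exact mul_le_mul_of_nonneg_left (sigmoid_neg_le_exp_neg x) hx.le

lemma tendsto_mul_neg_log_sigmoid_atTop :
    Tendsto (fun x ↦ x * -log (sigmoid x)) atTop (𝓝 0) := by
  refine tendsto_of_tendsto_of_tendsto_of_le_of_le' tendsto_const_nhds tendsto_mul_exp_neg_atTop
    ?_ ?_ <;> filter_upwards [eventually_ge_atTop 0] with x hx
  · exact mul_nonneg hx (neg_log_sigmoid_nonneg x)
  · exact mul_le_mul_of_nonneg_left (neg_log_sigmoid_le_exp_neg x) hx

lemma integral_mul_sigmoid_neg : ∫ x in Ioi 0, x * sigmoid (-x) = π ^ 2 / 12 := by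
  have hasDerivAt_primitive (x : ℝ) : HasDerivAt (fun y ↦ y * -log (sigmoid y))
      (-log (sigmoid x) - x * sigmoid (-x)) x := by
    convert! (hasDerivAt_id' x).mul (hasDerivAt_neg_log_sigmoid x) using 1
    ring
  have integral_deriv : ∫ x in Ioi 0, (-log (sigmoid x) - x * sigmoid (-x)) = 0 := by
    simpa only [zero_mul, sub_zero] using integral_Ioi_of_hasDerivAt_of_tendsto'
      (fun x _ ↦ hasDerivAt_primitive x)
      (integrableOn_neg_log_sigmoid.sub integrableOn_mul_sigmoid_neg)
      tendsto_mul_neg_log_sigmoid_atTop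
  rw [integral_sub integrableOn_neg_log_sigmoid integrableOn_mul_sigmoid_neg,
    integral_neg_log_sigmoid] at integral_deriv
  exact (sub_eq_zero.1 integral_deriv).symm

end LogSigmoidIntegrals

section RenyiEntropy

lemma renyiEntropy_one_sub (γ t : ℝ) : renyiEntropy γ (1 - t) = renyiEntropy γ t := by
  have mem_iff : (0 < 1 - t ∧ 1 - t < 1) ↔ 0 < t ∧ t < 1 := by
    constructor <;> rintro ⟨_, _⟩ <;> constructor <;> linarith
  simp only [renyiEntropy, mem_iff, sub_sub_cancel]
  congr 2 <;> ring_nf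

lemma renyiEntropy_one_of_mem_Icc {t : ℝ} (ht : t ∈ Icc 0 1) :
    renyiEntropy 1 t = -t * log t - (1 - t) * log (1 - t) := by
  rcases eq_endpoints_or_mem_Ioo_of_mem_Icc ht with rfl | rfl | ⟨h0, h1⟩
  · simp [renyiEntropy]
  · simp [renyiEntropy]
  · rw [renyiEntropy, if_pos ⟨h0, h1⟩, if_pos rfl]

lemma log_sigmoid_neg (x : ℝ) : log (sigmoid (-x)) = log (sigmoid x) - x := by
  rw [← sigmoid_mul_rexp_neg, log_mul (sigmoid_pos x).ne' (exp_pos _).ne', log_exp, sub_eq_add_neg]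

lemma renyiEntropy_one_sigmoid (x : ℝ) :
    renyiEntropy 1 (sigmoid x) = -log (sigmoid x) + x * sigmoid (-x) := by
  rw [renyiEntropy_one_of_mem_Icc ⟨sigmoid_nonneg x, sigmoid_le_one x⟩, ← sigmoid_neg,
    log_sigmoid_neg, sigmoid_neg]
  ring

lemma sigmoid_rpow_add_sigmoid_neg_rpow (γ x : ℝ) :
    sigmoid x ^ γ + sigmoid (-x) ^ γ = sigmoid x ^ γ * (sigmoid (γ * x))⁻¹ := by
  rw [← sigmoid_mul_rexp_neg, mul_rpow (sigmoid_nonneg x) (exp_pos _).le, ← exp_mul,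
    sigmoid_def (γ * x), inv_inv]
  ring_nf

lemma renyiEntropy_sigmoid {γ : ℝ} (hγ : γ ≠ 1) (x : ℝ) :
    renyiEntropy γ (sigmoid x) =
      (1 - γ)⁻¹ * (-log (sigmoid (γ * x)) - γ * -log (sigmoid x)) := by
  have rpow_pos : 0 < sigmoid x ^ γ := rpow_pos_of_pos (sigmoid_pos x) γ
  have sigmoid_inv_pos : 0 < (sigmoid (γ * x))⁻¹ := inv_pos.2 (sigmoid_pos _)
  rw [renyiEntropy, if_pos ⟨sigmoid_pos x, sigmoid_lt_one x⟩, if_neg hγ, ← sigmoid_neg,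
    sigmoid_rpow_add_sigmoid_neg_rpow, log_mul rpow_pos.ne' sigmoid_inv_pos.ne',
    log_rpow (sigmoid_pos x), log_inv]
  ring

lemma integral_renyiEntropy_one_sigmoid :
    ∫ x in Ioi 0, renyiEntropy 1 (sigmoid x) = π ^ 2 / 6 := by
  simp only [renyiEntropy_one_sigmoid]
  rw [integral_add integrableOn_neg_log_sigmoid integrableOn_mul_sigmoid_neg,
    integral_neg_log_sigmoid, integral_mul_sigmoid_neg]
  ring

lemma integral_renyiEntropy_sigmoid {γ : ℝ} (hγ : 0 < γ) :
    ∫ x in Ioi 0, renyiEntropy γ (sigmoid x) = π ^ 2 * (1 + γ) / (12 * γ) := by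
  rcases eq_or_ne γ 1 with rfl | hγ1
  · rw [integral_renyiEntropy_one_sigmoid]
    ring
  · have one_sub_ne_zero : 1 - γ ≠ 0 := sub_ne_zero.2 hγ1.symm
    simp only [renyiEntropy_sigmoid hγ1]
    rw [integral_const_mul, integral_sub (integrableOn_neg_log_sigmoid_mul hγ)
        (integrableOn_neg_log_sigmoid.const_mul γ), integral_const_mul,
      integral_neg_log_sigmoid_mul hγ, integral_neg_log_sigmoid]
    field_simp
    ring

end RenyiEntropy

theorem renyi_entropy_integral :
    (∀ γ : ℝ, 0 < γ →
      ∫ t in (0:ℝ)..1, renyiEntropy γ t / (t * (1 - t)) = π ^ 2 * (1 + γ) / (6 * γ)) ∧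
    ∫ t in (0:ℝ)..1, (-t * Real.log t - (1 - t) * Real.log (1 - t)) / (t * (1 - t))
      = π ^ 2 / 3 := by
  have integral_eq (γ : ℝ) (hγ : 0 < γ) :
      ∫ t in (0 : ℝ)..1, renyiEntropy γ t / (t * (1 - t)) = π ^ 2 * (1 + γ) / (6 * γ) := by
    rw [intervalIntegral_div_mul_one_sub_eq_two_mul_integral_sigmoid (renyiEntropy_one_sub γ),
      integral_renyiEntropy_sigmoid hγ]
    ring
  refine ⟨integral_eq, ?_⟩
  calc ∫ t in (0 : ℝ)..1, (-t * log t - (1 - t) * log (1 - t)) / (t * (1 - t))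
      = ∫ t in (0 : ℝ)..1, renyiEntropy 1 t / (t * (1 - t)) :=
        intervalIntegral.integral_congr fun t ht ↦ by
          simp only [renyiEntropy_one_of_mem_Icc (uIcc_of_le (zero_le_one' ℝ) ▸ ht)]
    _ = π ^ 2 / 3 := by
        rw [integral_eq 1 one_pos]
        ring
end

section
/- If f : ℝ → ℝ is Lipschitz with Lipschitz constant L, then the integral defining U(f) converges absolutely and |U(f)| ≤ 2L. -/
open MeasureTheory

/-!
A Lipschitz function deviates from its chord by at most `2 K a b ‖x - y‖` at the point
`a x + b y` with `a + b = 1`: the deviation is the same convex combination of `f z - f x` and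
`f z - f y`, and `z` lies at distance `b ‖x - y‖` from `x` and `a ‖x - y‖` from `y`. The factor
`a b` cancels the singular denominator `t (1 - t)`, so the integrand of `U` is bounded by `2 K`.
-/

open Set
open scoped NNReal

variable {E : Type*} [SeminormedAddCommGroup E] [NormedSpace ℝ E]

theorem norm_map_combo_sub_combo_le_of_lipschitzOnWith
    {V : Type*} [SeminormedAddCommGroup V] [NormedSpace ℝ V] {K : ℝ≥0} {f : V → E} {s : Set V}
    (hf : LipschitzOnWith K f s) (hs : Convex ℝ s) {x y : V} (hx : x ∈ s) (hy : y ∈ s)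
    {a b : ℝ} (ha : 0 ≤ a) (hb : 0 ≤ b) (hab : a + b = 1) :
    ‖f (a • x + b • y) - a • f x - b • f y‖ ≤ 2 * K * (a * b) * ‖x - y‖ := by
  set z := a • x + b • y with hz
  have hzs : z ∈ s := hs hx hy ha hb hab
  have hzx : ‖z - x‖ = b * ‖x - y‖ := by
    rw [show z - x = b • (y - x) by rw [hz, eq_sub_of_add_eq hab]; module,
      norm_smul_of_nonneg hb, norm_sub_rev]
  have hzy : ‖z - y‖ = a * ‖x - y‖ := by
    rw [show z - y = a • (x - y) by rw [hz, eq_sub_of_add_eq' hab]; module,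
      norm_smul_of_nonneg ha]
  have hcombo : f z - a • f x - b • f y = a • (f z - f x) + b • (f z - f y) := by
    rw [eq_sub_of_add_eq' hab]; module
  calc ‖f z - a • f x - b • f y‖
      ≤ ‖a • (f z - f x)‖ + ‖b • (f z - f y)‖ := hcombo ▸ norm_add_le _ _
    _ = a * ‖f z - f x‖ + b * ‖f z - f y‖ := by
        rw [norm_smul_of_nonneg ha, norm_smul_of_nonneg hb]
    _ ≤ a * (K * ‖z - x‖) + b * (K * ‖z - y‖) := by
        gcongr
        · exact hf.norm_sub_le hzs hx
        · exact hf.norm_sub_le hzs hy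
    _ = 2 * K * (a * b) * ‖x - y‖ := by rw [hzx, hzy]; ring

/-- The integrand of `U(f)`, for `f` with values in a real normed space; scalar multiplication by
the inverse replaces the division by `t (1 - t)`. Only its values on `(0, 1)` are meaningful. -/
noncomputable def uIntegrand (f : ℝ → E) (t : ℝ) : E :=
  (t * (1 - t))⁻¹ • (f (1 - t) - (1 - t) • f 1 - t • f 0)

theorem uIntegrand_eq_div (f : ℝ → ℝ) :
    uIntegrand f = fun t ↦ (f (1 - t) - (1 - t) * f 1 - t * f 0) / (t * (1 - t)) :=
  funext fun _ ↦ inv_mul_eq_div _ _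

theorem norm_uIntegrand_le {K : ℝ≥0} {f : ℝ → E} (hf : LipschitzOnWith K f (Icc 0 1))
    {t : ℝ} (ht : t ∈ Ioo 0 1) : ‖uIntegrand f t‖ ≤ 2 * K := by
  have ht' : 0 < 1 - t := sub_pos.2 ht.2
  have hpos : 0 < t * (1 - t) := mul_pos ht.1 ht'
  have hchord : ‖f (1 - t) - (1 - t) • f 1 - t • f 0‖ ≤ 2 * K * (t * (1 - t)) := by
    simpa [mul_comm t] using norm_map_combo_sub_combo_le_of_lipschitzOnWith hf (convex_Icc 0 1)
      (right_mem_Icc.2 zero_le_one) (left_mem_Icc.2 zero_le_one) ht'.le ht.1.le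
      (sub_add_cancel 1 t)
  rwa [uIntegrand, norm_smul_of_nonneg (inv_nonneg.2 hpos.le), inv_mul_le_iff₀' hpos]

theorem continuousOn_uIntegrand {f : ℝ → E} (hf : ContinuousOn f (Ioo 0 1)) :
    ContinuousOn (uIntegrand f) (Ioo 0 1) := by
  have hne : ∀ t ∈ Ioo (0 : ℝ) 1, t * (1 - t) ≠ 0 := fun t ht ↦
    (mul_pos ht.1 (sub_pos.2 ht.2)).ne'
  have hreflect : ContinuousOn (fun t ↦ f (1 - t)) (Ioo 0 1) :=
    hf.comp (by fun_prop) fun t ht ↦ ⟨sub_pos.2 ht.2, sub_lt_self 1 ht.1⟩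
  have hweight : ContinuousOn (fun t : ℝ ↦ (t * (1 - t))⁻¹) (Ioo 0 1) :=
    ContinuousOn.inv₀ (by fun_prop) hne
  exact hweight.smul ((hreflect.sub (by fun_prop)).sub (by fun_prop))

theorem U_bound_of_lipschitz_general {F : Type*} [NormedAddCommGroup F] [NormedSpace ℝ F]
    {K : ℝ≥0} {f : ℝ → F} (hf : LipschitzOnWith K f (Icc 0 1)) :
    IntegrableOn (uIntegrand f) (Ioo 0 1) ∧ ‖∫ t in Ioo (0 : ℝ) 1, uIntegrand f t‖ ≤ 2 * K := by
  have hbound : ∀ t ∈ Ioo (0 : ℝ) 1, ‖uIntegrand f t‖ ≤ 2 * K := fun _ ↦ norm_uIntegrand_le hf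
  have hmeas : AEStronglyMeasurable (uIntegrand f) (volume.restrict (Ioo 0 1)) :=
    (continuousOn_uIntegrand (hf.continuousOn.mono Ioo_subset_Icc_self)).aestronglyMeasurable
      measurableSet_Ioo
  constructor
  · exact .of_bound measure_Ioo_lt_top hmeas _ (ae_restrict_of_forall_mem measurableSet_Ioo hbound)
  · simpa using norm_setIntegral_le_of_norm_le_const (μ := volume) measure_Ioo_lt_top hbound

/-- If `f : ℝ → ℝ` is Lipschitz with Lipschitz constant `L`, then the integral defining
`U(f) = ∫₀¹ [f(1−t) − (1−t)f(1) − tf(0)]/(t(1−t)) dt` converges absolutely and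
`|U(f)| ≤ 2L`. -/
theorem U_bound_of_lipschitz (f : ℝ → ℝ) (L : ℝ)
    (hL : ∀ x y : ℝ, |f x - f y| ≤ L * |x - y|) :
    IntegrableOn (fun t : ℝ => (f (1 - t) - (1 - t) * f 1 - t * f 0) / (t * (1 - t)))
      (Set.Ioo 0 1) ∧
    |∫ t in Set.Ioo (0:ℝ) 1, (f (1 - t) - (1 - t) * f 1 - t * f 0) / (t * (1 - t))|
      ≤ 2 * L := by
  lift L to ℝ≥0 using by simpa using (abs_nonneg _).trans (hL 1 0)
  have hf : LipschitzWith L f := .of_dist_le_mul hL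
  simpa only [uIntegrand_eq_div, Real.norm_eq_abs] using
    U_bound_of_lipschitz_general hf.lipschitzOnWith
end

section
/- Let γ > 0, t₀ ∈ ℝ and 0 < R ≤ 1. Suppose f ∈ C(ℝ) ∩ C¹(ℝ∖{t₀}) is supported in [t₀−R, t₀+R] and ⫴f⫴₁ < ∞. Then f is Hölder continuous with exponent κ = min{γ, 1}: for all t₁, t₂ ∈ ℝ one has |f(t₁) − f(t₂)| ≤ 2·⫴f⫴₁·|t₁−t₂|^κ. -/
/-!
On the support of `f` the distance to the singular point `x₀` is at most `1`, so lowering the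
exponent from `γ` to `min γ 1` only weakens the weighted bounds, and we may assume `γ ≤ 1`.
If `‖x - y‖` is at least the mean of `‖x - x₀‖` and `‖y - x₀‖`, the bound on `f` and concavity of
`t ↦ t ^ γ` suffice. Otherwise the whole segment from `x` to `y` stays at distance at least
`‖x - y‖ / 2` from `x₀`, and the mean value inequality applies.
-/

open Filter Function Metric Set Topology

theorem rpow_add_rpow_le_two_mul_rpow_half_add {a b p : ℝ} (ha : 0 ≤ a) (hb : 0 ≤ b)
    (hp₀ : 0 ≤ p) (hp₁ : p ≤ 1) : a ^ p + b ^ p ≤ 2 * ((a + b) / 2) ^ p := by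
  have midpoint_concave := (Real.concaveOn_rpow hp₀ hp₁).2 (mem_Ici.2 ha) (mem_Ici.2 hb)
    (show (0 : ℝ) ≤ 1 / 2 by norm_num) (show (0 : ℝ) ≤ 1 / 2 by norm_num) (by norm_num)
  simp only [smul_eq_mul] at midpoint_concave
  rw [show (a + b) / 2 = 1 / 2 * a + 1 / 2 * b by ring]
  linarith

theorem half_rpow_sub_one_mul_le {d p : ℝ} (hd : 0 < d) (hp : 0 ≤ p) :
    (d / 2) ^ (p - 1) * d ≤ 2 * d ^ p :=
  calc (d / 2) ^ (p - 1) * d = 2 * (d / 2) ^ p := by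
        rw [Real.rpow_sub_one (half_pos hd).ne']
        field_simp
    _ ≤ 2 * d ^ p := by
        gcongr
        exact half_le_self hd.le

section NormedSpace

variable {E F : Type*} [NormedAddCommGroup E] [NormedSpace ℝ E]
  [NormedAddCommGroup F] [NormedSpace ℝ F]

theorem norm_sub_add_norm_sub_le_of_mem_segment {x y z : E} (hz : z ∈ segment ℝ x y) (p : E) :
    ‖x - p‖ + ‖y - p‖ ≤ 2 * ‖z - p‖ + ‖x - y‖ := by
  have through_z := dist_add_dist_of_mem_segment hz
  simp only [← dist_eq_norm]
  linarith [dist_triangle x z p, dist_triangle_left y p z]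

/-- The weighted norm bound `⫴f⫴₁ ≤ N` of order `γ` at the singular point `x₀`. Differentiability
away from `x₀` is part of the notion, as `fderiv` is `0` wherever `f` is not differentiable. -/
structure SingularNormLE (f : E → F) (x₀ : E) (γ N : ℝ) : Prop where
  differentiableAt : ∀ x ≠ x₀, DifferentiableAt ℝ f x
  norm_le : ∀ x ≠ x₀, ‖f x‖ ≤ N * ‖x - x₀‖ ^ γ
  norm_fderiv_le : ∀ x ≠ x₀, ‖fderiv ℝ f x‖ ≤ N * ‖x - x₀‖ ^ (γ - 1)

namespace SingularNormLE

variable {f : E → F} {x₀ x y : E} {γ κ N : ℝ}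

theorem nonneg (hf : SingularNormLE f x₀ γ N) (hx : x ≠ x₀) : 0 ≤ N :=
  nonneg_of_mul_nonneg_left ((norm_nonneg _).trans (hf.norm_le x hx))
    (Real.rpow_pos_of_pos (norm_sub_pos_iff.2 hx) γ)

theorem mono_exponent (hf : SingularNormLE f x₀ γ N) (hsupp : support f ⊆ closedBall x₀ 1)
    (hκ : κ ≤ γ) : SingularNormLE f x₀ κ N := by
  have rpow_le {x : E} (hx : x ≠ x₀) (hx₁ : x ∈ closedBall x₀ 1) {p q : ℝ} (hpq : p ≤ q) :
      N * ‖x - x₀‖ ^ q ≤ N * ‖x - x₀‖ ^ p :=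
    mul_le_mul_of_nonneg_left (Real.rpow_le_rpow_of_exponent_ge (norm_sub_pos_iff.2 hx)
      (mem_closedBall_iff_norm.1 hx₁) hpq) (hf.nonneg hx)
  have bound_nonneg {x : E} (hx : x ≠ x₀) (p : ℝ) : 0 ≤ N * ‖x - x₀‖ ^ p :=
    mul_nonneg (hf.nonneg hx) (Real.rpow_nonneg (norm_nonneg _) p)
  refine ⟨hf.differentiableAt, fun x hx ↦ ?_, fun x hx ↦ ?_⟩ <;>
    by_cases hx₁ : x ∈ closedBall x₀ 1
  · exact (hf.norm_le x hx).trans (rpow_le hx hx₁ hκ)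
  · rw [notMem_support.1 (notMem_subset hsupp hx₁), norm_zero]
    exact bound_nonneg hx _
  · exact (hf.norm_fderiv_le x hx).trans (rpow_le hx hx₁ (sub_le_sub_right hκ 1))
  · have tsupport_subset : tsupport f ⊆ closedBall x₀ 1 :=
      closure_minimal hsupp isClosed_closedBall
    rw [fderiv_of_notMem_tsupport ℝ (notMem_subset tsupport_subset hx₁), norm_zero]
    exact bound_nonneg hx _

theorem apply_eq_zero [Nontrivial E] (hf : SingularNormLE f x₀ γ N) (hγ : 0 < γ)
    (hcont : ContinuousAt f x₀) : f x₀ = 0 := by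
  have : (𝓝[≠] x₀).NeBot := Module.punctured_nhds_neBot ℝ E x₀
  have bound_tendsto : Tendsto (fun x ↦ N * ‖x - x₀‖ ^ γ) (𝓝[≠] x₀) (𝓝 0) := by
    have bound_continuous : Continuous fun x ↦ N * ‖x - x₀‖ ^ γ := by
      fun_prop (disch := positivity)
    simpa [hγ.ne'] using (bound_continuous.tendsto x₀).mono_left nhdsWithin_le_nhds
  have norm_le_bound : ∀ᶠ x in 𝓝[≠] x₀, ‖f x‖ ≤ N * ‖x - x₀‖ ^ γ :=
    eventually_mem_nhdsWithin.mono hf.norm_le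
  exact tendsto_nhds_unique (hcont.tendsto.mono_left nhdsWithin_le_nhds)
    (squeeze_zero_norm' norm_le_bound bound_tendsto)

theorem norm_sub_le_of_add_le (hf : SingularNormLE f x₀ γ N) (hγ₀ : 0 < γ) (hγ₁ : γ ≤ 1)
    (hcont : ContinuousAt f x₀) (hxy : x ≠ y) (hfar : ‖x - x₀‖ + ‖y - x₀‖ ≤ 2 * ‖x - y‖) :
    ‖f x - f y‖ ≤ 2 * N * ‖x - y‖ ^ γ := by
  have : Nontrivial E := nontrivial_of_ne x y hxy
  obtain ⟨z, hz⟩ := exists_ne x₀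
  have hN : 0 ≤ N := hf.nonneg hz
  have norm_le_everywhere (z : E) : ‖f z‖ ≤ N * ‖z - x₀‖ ^ γ := by
    rcases eq_or_ne z x₀ with rfl | hz
    · simp [hf.apply_eq_zero hγ₀ hcont, hγ₀.ne']
    · exact hf.norm_le z hz
  calc ‖f x - f y‖ ≤ ‖f x‖ + ‖f y‖ := norm_sub_le _ _
    _ ≤ N * (‖x - x₀‖ ^ γ + ‖y - x₀‖ ^ γ) := by
        linarith [norm_le_everywhere x, norm_le_everywhere y]
    _ ≤ N * (2 * ((‖x - x₀‖ + ‖y - x₀‖) / 2) ^ γ) := by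
        gcongr
        exact rpow_add_rpow_le_two_mul_rpow_half_add (norm_nonneg _) (norm_nonneg _) hγ₀.le hγ₁
    _ ≤ N * (2 * ‖x - y‖ ^ γ) := by
        gcongr
        linarith
    _ = 2 * N * ‖x - y‖ ^ γ := by ring

theorem norm_sub_le_of_lt_add (hf : SingularNormLE f x₀ γ N) (hγ₀ : 0 ≤ γ) (hγ₁ : γ ≤ 1)
    (hxy : x ≠ y) (hnear : 2 * ‖x - y‖ < ‖x - x₀‖ + ‖y - x₀‖) :
    ‖f x - f y‖ ≤ 2 * N * ‖x - y‖ ^ γ := by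
  have hd : 0 < ‖x - y‖ := norm_sub_pos_iff.2 hxy
  have half_le {z : E} (hz : z ∈ segment ℝ x y) : ‖x - y‖ / 2 ≤ ‖z - x₀‖ := by
    linarith [norm_sub_add_norm_sub_le_of_mem_segment hz x₀]
  have ne_center {z : E} (hz : z ∈ segment ℝ x y) : z ≠ x₀ :=
    norm_sub_pos_iff.1 ((half_pos hd).trans_le (half_le hz))
  have hN : 0 ≤ N := hf.nonneg (ne_center (left_mem_segment ℝ x y))
  have fderiv_le {z : E} (hz : z ∈ segment ℝ x y) :
      ‖fderiv ℝ f z‖ ≤ N * (‖x - y‖ / 2) ^ (γ - 1) :=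
    (hf.norm_fderiv_le z (ne_center hz)).trans <| mul_le_mul_of_nonneg_left
      (Real.rpow_le_rpow_of_nonpos (half_pos hd) (half_le hz) (sub_nonpos.2 hγ₁)) hN
  calc ‖f x - f y‖ ≤ N * (‖x - y‖ / 2) ^ (γ - 1) * ‖x - y‖ :=
        (convex_segment x y).norm_image_sub_le_of_norm_fderiv_le
          (fun z hz ↦ hf.differentiableAt z (ne_center hz)) (fun z hz ↦ fderiv_le hz)
          (right_mem_segment ℝ x y) (left_mem_segment ℝ x y)
    _ = N * ((‖x - y‖ / 2) ^ (γ - 1) * ‖x - y‖) := mul_assoc _ _ _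
    _ ≤ N * (2 * ‖x - y‖ ^ γ) :=
        mul_le_mul_of_nonneg_left (half_rpow_sub_one_mul_le hd hγ₀) hN
    _ = 2 * N * ‖x - y‖ ^ γ := by ring

theorem norm_sub_le (hf : SingularNormLE f x₀ γ N) (hγ₀ : 0 < γ) (hγ₁ : γ ≤ 1)
    (hcont : ContinuousAt f x₀) (x y : E) : ‖f x - f y‖ ≤ 2 * N * ‖x - y‖ ^ γ := by
  rcases eq_or_ne x y with rfl | hxy
  · simp [hγ₀.ne']
  rcases le_or_gt (‖x - x₀‖ + ‖y - x₀‖) (2 * ‖x - y‖) with hfar | hnear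
  · exact hf.norm_sub_le_of_add_le hγ₀ hγ₁ hcont hxy hfar
  · exact hf.norm_sub_le_of_lt_add hγ₀.le hγ₁ hxy hnear

end SingularNormLE

theorem holder_of_singular_norm_general {f : E → F} {x₀ : E} {γ N : ℝ} (hγ : 0 < γ)
    (hf : SingularNormLE f x₀ γ N) (hcont : ContinuousAt f x₀)
    (hsupp : support f ⊆ closedBall x₀ 1) (x y : E) :
    ‖f x - f y‖ ≤ 2 * N * ‖x - y‖ ^ min γ 1 :=
  (hf.mono_exponent hsupp (min_le_left γ 1)).norm_sub_le (lt_min hγ one_pos) (min_le_right γ 1)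
    hcont x y

end NormedSpace

/-- Let `γ > 0`, `t₀ ∈ ℝ`, `0 < R ≤ 1`. If `f` is continuous on `ℝ`, `C¹` away from `t₀`,
supported in `[t₀ − R, t₀ + R]`, and `⫴f⫴₁ ≤ N` (i.e. `|f(t)| ≤ N|t−t₀|^γ` and
`|f'(t)| ≤ N|t−t₀|^{γ−1}` for `t ≠ t₀`), then `f` is Hölder continuous with exponent
`κ = min γ 1`: `|f(t₁) − f(t₂)| ≤ 2N|t₁ − t₂|^κ` for all `t₁, t₂`. -/
theorem holder_of_singular_norm (γ : ℝ) (hγ : 0 < γ) (f : ℝ → ℝ) (t₀ R N : ℝ)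
    (hR0 : 0 < R) (hR1 : R ≤ 1)
    (hcont : Continuous f)
    (hdiff : ∀ t : ℝ, t ≠ t₀ → DifferentiableAt ℝ f t)
    (hderiv_cont : ContinuousOn (deriv f) {t₀}ᶜ)
    (hsupp : ∀ t : ℝ, t ∉ Set.Icc (t₀ - R) (t₀ + R) → f t = 0)
    (hf0 : ∀ t : ℝ, t ≠ t₀ → |f t| ≤ N * |t - t₀| ^ γ)
    (hf1 : ∀ t : ℝ, t ≠ t₀ → |deriv f t| ≤ N * |t - t₀| ^ (γ - 1)) :
    ∀ t₁ t₂ : ℝ, |f t₁ - f t₂| ≤ 2 * N * |t₁ - t₂| ^ min γ 1 :=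
  holder_of_singular_norm_general hγ
    ⟨hdiff, hf0, fun t ht ↦ norm_deriv_eq_norm_fderiv (f := f) ▸ hf1 t ht⟩ hcont.continuousAt
    ((support_subset_iff'.2 hsupp).trans
      (Real.closedBall_eq_Icc ▸ closedBall_subset_closedBall hR1))
end

section
/- Let κ ∈ (0,1] and let f : ℂ → ℂ satisfy Lip_κ(f) < ∞. Then for all s₁, s₂ in ℂ the integral defining U(s₁,s₂;f) converges absolutely, U(s₁,s₁;f) = 0, U(s₁,s₂;f) = U(s₂,s₁;f), and for every δ ∈ (0,κ) there is a constant C depending only on κ and δ such that for all s₁, s₂, r₁, r₂ in the closed unit disc of ℂ one has |U(s₁,s₂;f) − U(r₁,r₂;f)| ≤ C·Lip_κ(f)·(|s₁−r₁|^δ + |s₂−r₂|^δ). -/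
open MeasureTheory

/-- `U(s₁, s₂; f) = ∫₀¹ [f((1−t)s₁ + t s₂) − (1−t)f(s₁) − t f(s₂)]/(t(1−t)) dt`. -/
noncomputable def Ucoef (f : ℂ → ℂ) (s₁ s₂ : ℂ) : ℂ :=
  ∫ t in Set.Ioo (0:ℝ) 1,
    (f ((1 - t) • s₁ + t • s₂) - (1 - t) • f s₁ - t • f s₂) / ((t * (1 - t) : ℝ) : ℂ)

/-!
Since `1 / (t (1 - t)) = 1 / t + 1 / (1 - t)`, the integral `U(a, b; f)` is `V(a, b) + V(b, a)`,
where `V(a, b) = ∫₀¹ (f((1 - t) a + t b) - f(a)) / t dt`. The numerator of `V` is `O(t ^ κ)`, which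
makes the integral converge. When the endpoints move by at most `ε`, the numerator changes by at
most `2 M min(t D, ε) ^ κ`, where `D` bounds the lengths of both segments, and
`min(t D, ε) ^ κ ≤ (t D) ^ (κ - δ) ε ^ δ` leaves the integrable singularity `t ^ (κ - δ - 1)`.
-/

open Set AffineMap
open scoped NNReal

lemma holderWith_of_dist_le {X Y : Type*} [PseudoMetricSpace X] [PseudoMetricSpace Y] {C r : ℝ≥0}
    {f : X → Y} (h : ∀ x y, dist (f x) (f y) ≤ C * dist x y ^ (r : ℝ)) : HolderWith C r f := by
  intro x y
  rw [edist_nndist, edist_nndist, ← ENNReal.coe_rpow_of_nonneg _ r.coe_nonneg]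
  exact_mod_cast h x y

lemma exists_holderWith_of_dist_le {X Y : Type*} [MetricSpace X] [Nontrivial X]
    [PseudoMetricSpace Y] {M : ℝ} {r : ℝ≥0} {f : X → Y}
    (h : ∀ x y, dist (f x) (f y) ≤ M * dist x y ^ (r : ℝ)) :
    ∃ C : ℝ≥0, (C : ℝ) = M ∧ HolderWith C r f := by
  obtain ⟨x, y, hxy⟩ := exists_pair_ne X
  have hM : 0 ≤ M :=
    nonneg_of_mul_nonneg_left (dist_nonneg.trans (h x y)) (Real.rpow_pos_of_pos (dist_pos.2 hxy) _)
  exact ⟨⟨M, hM⟩, rfl, holderWith_of_dist_le h⟩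

lemma min_rpow_le_rpow_sub_mul_rpow {ρ ε κ δ : ℝ} (hρ : 0 ≤ ρ) (hε : 0 ≤ ε) (hδ : 0 ≤ δ)
    (hδκ : δ ≤ κ) : min ρ ε ^ κ ≤ ρ ^ (κ - δ) * ε ^ δ := by
  have hmin : 0 ≤ min ρ ε := le_min hρ hε
  have hκδ : 0 ≤ κ - δ := sub_nonneg.2 hδκ
  calc min ρ ε ^ κ = min ρ ε ^ (κ - δ) * min ρ ε ^ δ := by
        rw [← Real.rpow_add_of_nonneg hmin hκδ hδ, sub_add_cancel]
    _ ≤ ρ ^ (κ - δ) * ε ^ δ := by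
        gcongr
        exacts [min_le_left _ _, min_le_right _ _]

lemma max_rpow_le_rpow_add_rpow {x y δ : ℝ} (hx : 0 ≤ x) (hy : 0 ≤ y) :
    max x y ^ δ ≤ x ^ δ + y ^ δ := by
  have hxδ := Real.rpow_nonneg hx δ
  have hyδ := Real.rpow_nonneg hy δ
  rcases max_choice x y with h | h <;> rw [h] <;> linarith

lemma norm_sub_sub_sub_le_of_holderOnWith {E F : Type*} [SeminormedAddCommGroup E]
    [SeminormedAddCommGroup F] {M κ : ℝ≥0} {f : E → F} {K : Set E} (hf : HolderOnWith M κ f K)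
    {x y a b : E} (hx : x ∈ K) (hy : y ∈ K) (ha : a ∈ K) (hb : b ∈ K) {ρ ε : ℝ}
    (hxa : ‖x - a‖ ≤ ρ) (hyb : ‖y - b‖ ≤ ρ) (hxy : ‖x - y‖ ≤ ε) (hab : ‖a - b‖ ≤ ε) :
    ‖(f x - f a) - (f y - f b)‖ ≤ 2 * M * min ρ ε ^ (κ : ℝ) := by
  simp only [← dist_eq_norm] at hxa hyb hxy hab
  rcases le_total ρ ε with h | h
  · rw [min_eq_left h, mul_assoc, two_mul]
    refine norm_sub_le_of_le ?_ ?_ <;> rw [← dist_eq_norm]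
    exacts [hf.dist_le_of_le hx ha hxa, hf.dist_le_of_le hy hb hyb]
  · rw [min_eq_right h, mul_assoc, two_mul, sub_sub_sub_comm]
    refine norm_sub_le_of_le ?_ ?_ <;> rw [← dist_eq_norm]
    exacts [hf.dist_le_of_le hx hy hxy, hf.dist_le_of_le ha hb hab]

lemma integrableOn_Ioo_zero_one_rpow_sub_one {α : ℝ} (hα : 0 < α) :
    IntegrableOn (fun t : ℝ => t ^ (α - 1)) (Ioo 0 1) :=
  (intervalIntegral.integrableOn_Ioo_rpow_iff one_pos).2 (by linarith)

lemma integral_Ioo_zero_one_rpow_sub_one {α : ℝ} (hα : 0 < α) :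
    ∫ t in Ioo (0 : ℝ) 1, t ^ (α - 1) = 1 / α := by
  rw [← integral_Ioc_eq_integral_Ioo, ← intervalIntegral.integral_of_le zero_le_one,
    integral_rpow (Or.inl (by linarith)), sub_add_cancel, Real.one_rpow, Real.zero_rpow hα.ne',
    sub_zero]

lemma measurePreserving_one_sub_Ioo_zero_one :
    MeasurePreserving (fun t : ℝ => 1 - t) (volume.restrict (Ioo 0 1))
      (volume.restrict (Ioo 0 1)) := by
  simpa only [preimage_const_sub_Ioo, sub_self, sub_zero] using
    (volume.measurePreserving_sub_left (1 : ℝ)).restrict_preimage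
      (measurableSet_Ioo (a := (0 : ℝ)) (b := 1))

lemma measurableEmbedding_one_sub : MeasurableEmbedding fun t : ℝ => 1 - t :=
  (MeasurableEquiv.subLeft (1 : ℝ)).measurableEmbedding

variable {E F : Type*} [NormedAddCommGroup E] [NormedSpace ℝ E] [NormedAddCommGroup F]
  [NormedSpace ℝ F]

lemma norm_lineMap_sub_lineMap_le {a b a' b' : E} {ε t : ℝ} (ha : ‖a - a'‖ ≤ ε)
    (hb : ‖b - b'‖ ≤ ε) (ht : t ∈ Icc (0 : ℝ) 1) :
    ‖lineMap a b t - lineMap a' b' t‖ ≤ ε := by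
  rw [← mem_closedBall_zero_iff] at ha hb ⊢
  rw [← vsub_eq_sub, lineMap_vsub_lineMap]
  exact (convex_closedBall (0 : E) ε).lineMap_mem ha hb ht

/-- The difference quotient of `f` along the segment from `a` to `b`, based at `a`: the integrand of
`V(a, b)`. -/
noncomputable def segmentSlope (f : E → F) (a b : E) (t : ℝ) : F :=
  t⁻¹ • (f (lineMap a b t) - f a)

/-- The integrand of `U(a, b; f)` for maps between real normed spaces: the error of the linear
interpolation of `f` between `a` and `b`, divided by `t (1 - t)`. -/
noncomputable def interpolationQuotient (f : E → F) (a b : E) (t : ℝ) : F :=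
  (t * (1 - t))⁻¹ • (f (lineMap a b t) - (1 - t) • f a - t • f b)

/-- `U(a, b; f)` for maps between real normed spaces. -/
noncomputable def interpolationIntegral (f : E → F) (a b : E) : F :=
  ∫ t in Ioo (0 : ℝ) 1, interpolationQuotient f a b t

lemma interpolationQuotient_self (f : E → F) (a : E) (t : ℝ) :
    interpolationQuotient f a a t = 0 := by
  rw [interpolationQuotient, lineMap_same_apply, sub_sub, ← add_smul, sub_add_cancel, one_smul,
    sub_self, smul_zero]

lemma interpolationIntegral_self (f : E → F) (a : E) : interpolationIntegral f a a = 0 := by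
  simp only [interpolationIntegral, interpolationQuotient_self, integral_zero]

lemma interpolationQuotient_one_sub (f : E → F) (a b : E) (t : ℝ) :
    interpolationQuotient f a b (1 - t) = interpolationQuotient f b a t := by
  rw [interpolationQuotient, interpolationQuotient, lineMap_apply_one_sub, sub_sub_cancel,
    sub_right_comm, mul_comm]

lemma interpolationIntegral_comm (f : E → F) (a b : E) :
    interpolationIntegral f a b = interpolationIntegral f b a := by
  simp only [interpolationIntegral, ← interpolationQuotient_one_sub f a b]
  exact (measurePreserving_one_sub_Ioo_zero_one.integral_comp measurableEmbedding_one_sub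
    (interpolationQuotient f a b)).symm

lemma interpolationQuotient_eq_segmentSlope_add (f : E → F) (a b : E) {t : ℝ}
    (ht : t ∈ Ioo (0 : ℝ) 1) :
    interpolationQuotient f a b t = segmentSlope f a b t + segmentSlope f b a (1 - t) := by
  have ht₀ : t ≠ 0 := ht.1.ne'
  have ht₁ : 1 - t ≠ 0 := (sub_pos.2 ht.2).ne'
  rw [interpolationQuotient, segmentSlope, segmentSlope, lineMap_apply_one_sub]
  match_scalars <;> field_simp
  ring

section HolderOnConvex

variable {M κ : ℝ≥0} {f : E → F} {K : Set E}

lemma norm_segmentSlope_le (hK : Convex ℝ K) (hf : HolderOnWith M κ f K) {a b : E} (ha : a ∈ K)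
    (hb : b ∈ K) {t : ℝ} (ht : t ∈ Ioo (0 : ℝ) 1) :
    ‖segmentSlope f a b t‖ ≤ M * ‖a - b‖ ^ (κ : ℝ) * t ^ (κ - 1 : ℝ) := by
  have hdist := hf.dist_le (hK.lineMap_mem ha hb (Ioo_subset_Icc_self ht)) ha
  rw [dist_lineMap_left, Real.norm_of_nonneg ht.1.le,
    Real.mul_rpow ht.1.le dist_nonneg, dist_eq_norm, dist_eq_norm] at hdist
  calc ‖segmentSlope f a b t‖ = t⁻¹ * ‖f (lineMap a b t) - f a‖ := by
        rw [segmentSlope, norm_smul, norm_inv, Real.norm_of_nonneg ht.1.le]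
    _ ≤ t⁻¹ * (M * (t ^ (κ : ℝ) * ‖a - b‖ ^ (κ : ℝ))) := by
        have := ht.1
        gcongr
    _ = M * ‖a - b‖ ^ (κ : ℝ) * t ^ (κ - 1 : ℝ) := by
        rw [Real.rpow_sub_one ht.1.ne']
        ring

lemma continuousOn_segmentSlope (hκ : 0 < κ) (hK : Convex ℝ K) (hf : HolderOnWith M κ f K)
    {a b : E} (ha : a ∈ K) (hb : b ∈ K) : ContinuousOn (segmentSlope f a b) (Ioo 0 1) := by
  have hcomp : ContinuousOn (fun t : ℝ => f (lineMap a b t)) (Ioo 0 1) :=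
    (hf.continuousOn hκ).comp lineMap_continuous.continuousOn
      fun t ht => hK.lineMap_mem ha hb (Ioo_subset_Icc_self ht)
  exact (continuousOn_inv₀.mono fun t ht => ht.1.ne').smul (hcomp.sub continuousOn_const)

lemma integrableOn_segmentSlope (hκ : 0 < κ) (hK : Convex ℝ K) (hf : HolderOnWith M κ f K)
    {a b : E} (ha : a ∈ K) (hb : b ∈ K) : IntegrableOn (segmentSlope f a b) (Ioo 0 1) := by
  refine Integrable.mono'
    ((integrableOn_Ioo_zero_one_rpow_sub_one hκ).const_mul (M * ‖a - b‖ ^ (κ : ℝ)))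
    ((continuousOn_segmentSlope hκ hK hf ha hb).aestronglyMeasurable measurableSet_Ioo) ?_
  filter_upwards [ae_restrict_mem measurableSet_Ioo] with t ht
  exact norm_segmentSlope_le hK hf ha hb ht

lemma norm_segmentSlope_sub_le (hK : Convex ℝ K) (hf : HolderOnWith M κ f K) {a b a' b' : E}
    (ha : a ∈ K) (hb : b ∈ K) (ha' : a' ∈ K) (hb' : b' ∈ K) {D ε δ : ℝ} (hδ : 0 ≤ δ)
    (hδκ : δ ≤ κ) (hab : ‖a - b‖ ≤ D) (hab' : ‖a' - b'‖ ≤ D) (haa' : ‖a - a'‖ ≤ ε)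
    (hbb' : ‖b - b'‖ ≤ ε) {t : ℝ} (ht : t ∈ Ioo (0 : ℝ) 1) :
    ‖segmentSlope f a b t - segmentSlope f a' b' t‖ ≤
      2 * M * (D ^ (κ - δ) * ε ^ δ) * t ^ (κ - δ - 1) := by
  have ht₀ : 0 < t := ht.1
  have htI : t ∈ Icc (0 : ℝ) 1 := Ioo_subset_Icc_self ht
  have hD : 0 ≤ D := (norm_nonneg _).trans hab
  have hε : 0 ≤ ε := (norm_nonneg _).trans haa'
  have hstep {x y : E} (hxy : ‖x - y‖ ≤ D) : ‖lineMap x y t - x‖ ≤ t * D := by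
    rw [← dist_eq_norm, dist_lineMap_left, Real.norm_of_nonneg ht₀.le, dist_eq_norm]
    gcongr
  calc ‖segmentSlope f a b t - segmentSlope f a' b' t‖
      = t⁻¹ * ‖(f (lineMap a b t) - f a) - (f (lineMap a' b' t) - f a')‖ := by
        rw [segmentSlope, segmentSlope, ← smul_sub, norm_smul, norm_inv,
          Real.norm_of_nonneg ht₀.le]
    _ ≤ t⁻¹ * (2 * M * min (t * D) ε ^ (κ : ℝ)) := by
        gcongr
        exact norm_sub_sub_sub_le_of_holderOnWith hf (hK.lineMap_mem ha hb htI)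
          (hK.lineMap_mem ha' hb' htI) ha ha' (hstep hab) (hstep hab')
          (norm_lineMap_sub_lineMap_le haa' hbb' htI) haa'
    _ ≤ t⁻¹ * (2 * M * ((t * D) ^ (κ - δ) * ε ^ δ)) := by
        gcongr
        exact min_rpow_le_rpow_sub_mul_rpow (by positivity) hε hδ hδκ
    _ = 2 * M * (D ^ (κ - δ) * ε ^ δ) * t ^ (κ - δ - 1) := by
        rw [Real.mul_rpow ht₀.le hD, Real.rpow_sub_one ht₀.ne']
        ring

lemma norm_integral_segmentSlope_sub_le (hK : Convex ℝ K) (hf : HolderOnWith M κ f K)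
    {a b a' b' : E} (ha : a ∈ K) (hb : b ∈ K) (ha' : a' ∈ K) (hb' : b' ∈ K) {D ε δ : ℝ}
    (hδ : 0 ≤ δ) (hδκ : δ < κ) (hab : ‖a - b‖ ≤ D) (hab' : ‖a' - b'‖ ≤ D)
    (haa' : ‖a - a'‖ ≤ ε) (hbb' : ‖b - b'‖ ≤ ε) :
    ‖(∫ t in Ioo (0 : ℝ) 1, segmentSlope f a b t) -
        ∫ t in Ioo (0 : ℝ) 1, segmentSlope f a' b' t‖ ≤
      2 * D ^ (κ - δ) / (κ - δ) * M * ε ^ δ := by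
  have hκ : 0 < κ := hδ.trans_lt hδκ
  have hκδ : 0 < κ - δ := sub_pos.2 hδκ
  rw [← integral_sub (integrableOn_segmentSlope hκ hK hf ha hb)
    (integrableOn_segmentSlope hκ hK hf ha' hb')]
  calc _ ≤ ∫ t in Ioo (0 : ℝ) 1, 2 * M * (D ^ (κ - δ) * ε ^ δ) * t ^ (κ - δ - 1) := by
        refine norm_integral_le_of_norm_le
          ((integrableOn_Ioo_zero_one_rpow_sub_one hκδ).const_mul _) ?_
        filter_upwards [ae_restrict_mem measurableSet_Ioo] with t ht
        exact norm_segmentSlope_sub_le hK hf ha hb ha' hb' hδ hδκ.le hab hab' haa' hbb' ht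
    _ = 2 * D ^ (κ - δ) / (κ - δ) * M * ε ^ δ := by
        rw [integral_const_mul, integral_Ioo_zero_one_rpow_sub_one hκδ]
        ring

lemma integrableOn_segmentSlope_one_sub (hκ : 0 < κ) (hK : Convex ℝ K)
    (hf : HolderOnWith M κ f K) {a b : E} (ha : a ∈ K) (hb : b ∈ K) :
    IntegrableOn (fun t => segmentSlope f a b (1 - t)) (Ioo 0 1) :=
  (measurePreserving_one_sub_Ioo_zero_one.integrable_comp_emb measurableEmbedding_one_sub).2
    (integrableOn_segmentSlope hκ hK hf ha hb)

lemma integrableOn_interpolationQuotient (hκ : 0 < κ) (hK : Convex ℝ K)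
    (hf : HolderOnWith M κ f K) {a b : E} (ha : a ∈ K) (hb : b ∈ K) :
    IntegrableOn (interpolationQuotient f a b) (Ioo 0 1) :=
  ((integrableOn_segmentSlope hκ hK hf ha hb).add
    (integrableOn_segmentSlope_one_sub hκ hK hf hb ha)).congr_fun
    (fun _ ht => (interpolationQuotient_eq_segmentSlope_add f a b ht).symm) measurableSet_Ioo

lemma interpolationIntegral_eq_integral_segmentSlope_add (hκ : 0 < κ) (hK : Convex ℝ K)
    (hf : HolderOnWith M κ f K) {a b : E} (ha : a ∈ K) (hb : b ∈ K) :
    interpolationIntegral f a b =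
      (∫ t in Ioo (0 : ℝ) 1, segmentSlope f a b t) +
        ∫ t in Ioo (0 : ℝ) 1, segmentSlope f b a t := by
  rw [interpolationIntegral, setIntegral_congr_fun measurableSet_Ioo
      fun t ht => interpolationQuotient_eq_segmentSlope_add f a b ht,
    integral_add (integrableOn_segmentSlope hκ hK hf ha hb)
      (integrableOn_segmentSlope_one_sub hκ hK hf hb ha),
    measurePreserving_one_sub_Ioo_zero_one.integral_comp measurableEmbedding_one_sub
      (segmentSlope f b a)]

lemma norm_interpolationIntegral_sub_le (hK : Convex ℝ K) (hf : HolderOnWith M κ f K)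
    {a b a' b' : E} (ha : a ∈ K) (hb : b ∈ K) (ha' : a' ∈ K) (hb' : b' ∈ K) {D ε δ : ℝ}
    (hδ : 0 ≤ δ) (hδκ : δ < κ) (hab : ‖a - b‖ ≤ D) (hab' : ‖a' - b'‖ ≤ D)
    (haa' : ‖a - a'‖ ≤ ε) (hbb' : ‖b - b'‖ ≤ ε) :
    ‖interpolationIntegral f a b - interpolationIntegral f a' b'‖ ≤
      4 * D ^ (κ - δ) / (κ - δ) * M * ε ^ δ := by
  have hκ : 0 < κ := hδ.trans_lt hδκ
  rw [interpolationIntegral_eq_integral_segmentSlope_add hκ hK hf ha hb,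
    interpolationIntegral_eq_integral_segmentSlope_add hκ hK hf ha' hb', add_sub_add_comm]
  refine (norm_add_le_of_le
    (norm_integral_segmentSlope_sub_le hK hf ha hb ha' hb' hδ hδκ hab hab' haa' hbb')
    (norm_integral_segmentSlope_sub_le hK hf hb ha hb' ha' hδ hδκ (norm_sub_rev a b ▸ hab)
      (norm_sub_rev a' b' ▸ hab') hbb' haa')).trans_eq ?_
  ring

end HolderOnConvex

theorem Ucoef_properties_general [CompleteSpace F] {M κ : ℝ≥0} (hκ : 0 < κ) {f : E → F}
    {K : Set E} (hK : Convex ℝ K) (hf : HolderOnWith M κ f K) :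
    (∀ s₁ ∈ K, ∀ s₂ ∈ K, IntegrableOn (interpolationQuotient f s₁ s₂) (Ioo 0 1)) ∧
    (∀ s, interpolationIntegral f s s = 0) ∧
    (∀ s₁ s₂, interpolationIntegral f s₁ s₂ = interpolationIntegral f s₂ s₁) ∧
    (∀ δ D : ℝ, 0 ≤ δ → δ < κ → ∀ s₁ ∈ K, ∀ s₂ ∈ K, ∀ r₁ ∈ K, ∀ r₂ ∈ K,
      ‖s₁ - s₂‖ ≤ D → ‖r₁ - r₂‖ ≤ D →
      ‖interpolationIntegral f s₁ s₂ - interpolationIntegral f r₁ r₂‖ ≤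
        4 * D ^ (κ - δ) / (κ - δ) * M * (‖s₁ - r₁‖ ^ δ + ‖s₂ - r₂‖ ^ δ)) := by
  refine ⟨fun _ hs₁ _ hs₂ => integrableOn_interpolationQuotient hκ hK hf hs₁ hs₂,
    interpolationIntegral_self f, interpolationIntegral_comm f, ?_⟩
  intro δ D hδ hδκ s₁ hs₁ s₂ hs₂ r₁ hr₁ r₂ hr₂ hs hr
  have hD : 0 ≤ D := (norm_nonneg _).trans hs
  have hC : 0 ≤ 4 * D ^ (κ - δ) / (κ - δ) * M :=
    mul_nonneg (div_nonneg (by positivity) (sub_nonneg.2 hδκ.le)) M.coe_nonneg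
  exact (norm_interpolationIntegral_sub_le hK hf hs₁ hs₂ hr₁ hr₂ hδ hδκ hs hr
    (le_max_left _ _) (le_max_right _ _)).trans
    (mul_le_mul_of_nonneg_left (max_rpow_le_rpow_add_rpow (norm_nonneg _) (norm_nonneg _)) hC)

lemma interpolationQuotient_complex (f : ℂ → ℂ) (s₁ s₂ : ℂ) (t : ℝ) :
    interpolationQuotient f s₁ s₂ t =
      (f ((1 - t) • s₁ + t • s₂) - (1 - t) • f s₁ - t • f s₂) / ((t * (1 - t) : ℝ) : ℂ) := by
  rw [interpolationQuotient, lineMap_apply_module, Complex.real_smul, Complex.ofReal_inv,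
    div_eq_inv_mul]

lemma Ucoef_eq_interpolationIntegral (f : ℂ → ℂ) (s₁ s₂ : ℂ) :
    Ucoef f s₁ s₂ = interpolationIntegral f s₁ s₂ := by
  simp only [Ucoef, interpolationIntegral, interpolationQuotient_complex]

/-- For `κ ∈ (0,1]` and `f : ℂ → ℂ` with `Lip_κ(f) ≤ M`, the integral defining
`U(s₁,s₂;f)` converges absolutely, `U(s₁,s₁;f) = 0`, `U(s₁,s₂;f) = U(s₂,s₁;f)`, and for
every `δ ∈ (0,κ)` there is a constant `C = C(κ,δ)` such that for all `s₁,s₂,r₁,r₂` in the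
closed unit disc, `|U(s₁,s₂;f) − U(r₁,r₂;f)| ≤ C·Lip_κ(f)·(|s₁−r₁|^δ + |s₂−r₂|^δ)`. -/
theorem Ucoef_properties (κ : ℝ) (hκ0 : 0 < κ) (hκ1 : κ ≤ 1)
    (δ : ℝ) (hδ0 : 0 < δ) (hδκ : δ < κ) :
    ∃ C : ℝ, ∀ (f : ℂ → ℂ) (M : ℝ),
      (∀ z w : ℂ, ‖f z - f w‖ ≤ M * ‖z - w‖ ^ κ) →
      (∀ s₁ s₂ : ℂ,
        IntegrableOn
          (fun t : ℝ =>
            (f ((1 - t) • s₁ + t • s₂) - (1 - t) • f s₁ - t • f s₂) / ((t * (1 - t) : ℝ) : ℂ))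
          (Set.Ioo 0 1)) ∧
      (∀ s : ℂ, Ucoef f s s = 0) ∧
      (∀ s₁ s₂ : ℂ, Ucoef f s₁ s₂ = Ucoef f s₂ s₁) ∧
      (∀ s₁ s₂ r₁ r₂ : ℂ, ‖s₁‖ ≤ 1 → ‖s₂‖ ≤ 1 → ‖r₁‖ ≤ 1 → ‖r₂‖ ≤ 1 →
        ‖Ucoef f s₁ s₂ - Ucoef f r₁ r₂‖ ≤ C * M * (‖s₁ - r₁‖ ^ δ + ‖s₂ - r₂‖ ^ δ)) := by
  lift κ to ℝ≥0 using hκ0.le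
  refine ⟨4 * (1 + 1) ^ (κ - δ) / (κ - δ), fun f M hf => ?_⟩
  simp only [← dist_eq_norm] at hf
  obtain ⟨M, rfl, hholder⟩ := exists_holderWith_of_dist_le hf
  obtain ⟨hint, hself, hcomm, hdiff⟩ :=
    Ucoef_properties_general hκ0 convex_univ (hholder.holderOnWith univ)
  simp only [← interpolationQuotient_complex, Ucoef_eq_interpolationIntegral]
  exact ⟨fun s₁ s₂ => hint s₁ trivial s₂ trivial, hself, hcomm,
    fun s₁ s₂ r₁ r₂ hs₁ hs₂ hr₁ hr₂ => hdiff δ (1 + 1) hδ0.le hδκ s₁ trivial s₂ trivial r₁ trivial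
      r₂ trivial (norm_sub_le_of_le hs₁ hs₂) (norm_sub_le_of_le hr₁ hr₂)⟩
end

section
/- Let n ≥ 3 be an integer. There is a constant C, depending only on n, with the following property: for every complex Hilbert space H, all bounded self-adjoint operators A, B on H, every bounded operator J on H, and every compactly supported f ∈ Cⁿ(ℝ), one has, in operator norm, ‖f(A) J − J f(B)‖ ≤ C · N_n(f) · ‖A J − J B‖. -/
open scoped BigOperators

/-- `N_n(f) = ∫ F(x) ⟨x⟩^{n−2} dx` with `F(x) = Σ_{l=0}^n |f^{(l)}(x)| ⟨x⟩^{−n+l}`,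
`⟨x⟩ = √(1+x²)`. -/
noncomputable def Nseminorm (n : ℕ) (f : ℝ → ℝ) : ℝ :=
  ∫ x : ℝ,
    (∑ l ∈ Finset.range (n + 1),
      |iteratedDeriv l f x| * Real.sqrt (1 + x ^ 2) ^ ((l : ℤ) - (n : ℤ))) *
    Real.sqrt (1 + x ^ 2) ^ ((n : ℤ) - 2)

/-!
Write `f(A) = ∫ 𝓕f(ξ) e^{2πiξA} dξ`. By Duhamel's formula `‖e^{itA}J - Je^{itB}‖ ≤ |t| ‖AJ - JB‖`,
so the constant in the quasi-commutator estimate is at most the `L¹` norm of `𝓕(f')`. To bound that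
norm by derivatives of `f` with the weights of `N₃(f)`, the Fourier integral of `g = f'` at the
frequency `τ = 2πξ` is split with the weight `κ = (1 + τ²⟨x⟩²)⁻¹`: the part `κg` is estimated by
absolute values, and `(1 - κ)g = τ²⟨x⟩²κg` is integrated by parts twice. Both parts are at most
`∫ ⟨x⟩ κ M dx`, where `M = O(⟨x⟩⁻¹|g| + |g'| + ⟨x⟩|g''|)` does not depend on `ξ`, and
`∫ ⟨x⟩ κ dξ = 1/2` for every `x`. The case `n = 3` suffices, since `N_n` increases with `n`.

A function `f` with finite `N_n(f)` is reduced to compact support by rescaled cutoffs `η_R`: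
`|η_R^{(k)}| ≤ K_k ⟨x⟩^{-k}` uniformly in `R ≥ 1`, so that `N_n(f η_R) → N_n(f)` by dominated
convergence, while `f η_R = f` on the spectra of `A` and `B` once `R` is large.
-/

open MeasureTheory
open scoped ContDiff FourierTransform

/-- The Japanese bracket `⟨x⟩ = √(1 + x²)` in which the weights of `Nseminorm` are written. -/
noncomputable def japaneseBracket (x : ℝ) : ℝ := √(1 + x ^ 2)

lemma japaneseBracket_sq (x : ℝ) : japaneseBracket x ^ 2 = 1 + x ^ 2 :=
  Real.sq_sqrt (by positivity)

lemma one_le_japaneseBracket (x : ℝ) : 1 ≤ japaneseBracket x :=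
  Real.one_le_sqrt.2 (le_add_of_nonneg_right (sq_nonneg x))

lemma japaneseBracket_pos (x : ℝ) : 0 < japaneseBracket x :=
  one_pos.trans_le (one_le_japaneseBracket x)

lemma abs_le_japaneseBracket (x : ℝ) : |x| ≤ japaneseBracket x :=
  Real.abs_le_sqrt (by linarith)

lemma continuous_japaneseBracket : Continuous japaneseBracket := by
  unfold japaneseBracket
  fun_prop

lemma continuous_japaneseBracket_inv : Continuous fun x ↦ (japaneseBracket x)⁻¹ :=
  continuous_japaneseBracket.inv₀ fun x ↦ (japaneseBracket_pos x).ne'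

lemma abs_japaneseBracket_inv_le_one (x : ℝ) : |(japaneseBracket x)⁻¹| ≤ 1 := by
  rw [abs_of_pos (inv_pos.2 (japaneseBracket_pos x))]
  exact inv_le_one_of_one_le₀ (one_le_japaneseBracket x)

lemma japaneseBracket_le_mul {R : ℝ} (hR : 1 ≤ R) (x : ℝ) :
    japaneseBracket x ≤ R * japaneseBracket (R⁻¹ * x) := by
  refine Real.sqrt_le_left (by positivity [japaneseBracket_pos (R⁻¹ * x)]) |>.2 ?_
  rw [mul_pow, japaneseBracket_sq, mul_add, mul_pow, inv_pow, mul_inv_cancel_left₀ (by positivity)]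
  nlinarith

/-- The Lorentzian `(1 + τ²⟨x⟩²)⁻¹`. It is close to `1` for `|τ|⟨x⟩ ≪ 1`, where the Fourier integral
at frequency `τ` is estimated by absolute values, and its complement `τ²⟨x⟩²(1 + τ²⟨x⟩²)⁻¹` carries
the factor `τ²` that absorbs two integrations by parts. -/
noncomputable def lorentzian (τ x : ℝ) : ℝ := (1 + τ ^ 2 * (1 + x ^ 2))⁻¹

section Lorentzian

variable (τ x : ℝ)

lemma lorentzian_pos : 0 < lorentzian τ x := by
  unfold lorentzian
  positivity

lemma lorentzian_le_one : lorentzian τ x ≤ 1 :=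
  inv_le_one_of_one_le₀ (le_add_of_nonneg_right (by positivity))

lemma lorentzian_add_mul_eq_one :
    lorentzian τ x + τ ^ 2 * ((1 + x ^ 2) * lorentzian τ x) = 1 := by
  unfold lorentzian
  field_simp

lemma continuous_lorentzian : Continuous fun p : ℝ × ℝ ↦ lorentzian p.1 p.2 := by
  unfold lorentzian
  exact Continuous.inv₀ (by fun_prop) fun p ↦ by positivity

lemma continuous_lorentzian_right : Continuous (lorentzian τ) :=
  continuous_lorentzian.comp (.prodMk_right τ)

lemma hasDerivAt_lorentzian :
    HasDerivAt (lorentzian τ) (-(2 * τ ^ 2 * x * lorentzian τ x ^ 2)) x := by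
  have h : HasDerivAt (fun x ↦ 1 + τ ^ 2 * (1 + x ^ 2)) (τ ^ 2 * (2 * x)) x := by
    simpa using (((hasDerivAt_pow 2 x).const_add 1).const_mul (τ ^ 2)).const_add 1
  convert! h.inv (by positivity) using 1
  simp only [lorentzian]
  field_simp

lemma hasDerivAt_sq_mul_lorentzian :
    HasDerivAt (fun x ↦ (1 + x ^ 2) * lorentzian τ x) (2 * x * lorentzian τ x ^ 2) x := by
  convert! ((hasDerivAt_pow 2 x).const_add 1).mul (hasDerivAt_lorentzian τ x) using 1
  linear_combination (2 * x * lorentzian τ x) * lorentzian_add_mul_eq_one τ x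

lemma hasDerivAt_mul_lorentzian_sq :
    HasDerivAt (fun x ↦ 2 * x * lorentzian τ x ^ 2)
      (2 * lorentzian τ x ^ 2 - 8 * τ ^ 2 * x ^ 2 * lorentzian τ x ^ 3) x := by
  convert! ((hasDerivAt_id x).const_mul 2).mul ((hasDerivAt_lorentzian τ x).pow 2) using 1
  simp only [id, Nat.cast_ofNat, Pi.pow_apply]
  ring

lemma sq_mul_lorentzian_le {τ : ℝ} (hτ : τ ≠ 0) (x : ℝ) :
    japaneseBracket x ^ 2 * lorentzian τ x ≤ (τ ^ 2)⁻¹ := by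
  rw [← one_div, le_div_iff₀' (by positivity), japaneseBracket_sq]
  linarith [lorentzian_add_mul_eq_one τ x, lorentzian_pos τ x]

lemma mul_lorentzian_le {τ : ℝ} (hτ : τ ≠ 0) (x : ℝ) :
    japaneseBracket x * lorentzian τ x ≤ (τ ^ 2)⁻¹ := by
  refine le_trans ?_ (sq_mul_lorentzian_le hτ x)
  have hk := (lorentzian_pos τ x).le
  gcongr
  exact le_self_pow₀ (one_le_japaneseBracket x) two_ne_zero

lemma abs_two_mul_lorentzian_sq_le :
    |2 * x * lorentzian τ x ^ 2| ≤ 2 * japaneseBracket x * lorentzian τ x := by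
  have hk := lorentzian_pos τ x
  rw [abs_mul, abs_mul, abs_two, abs_of_pos (pow_pos hk 2)]
  have hsq : lorentzian τ x ^ 2 ≤ lorentzian τ x :=
    pow_le_of_le_one hk.le (lorentzian_le_one τ x) two_ne_zero
  gcongr
  · exact mul_nonneg zero_le_two (japaneseBracket_pos x).le
  · exact abs_le_japaneseBracket x

lemma abs_lorentzian_second_deriv_le :
    |2 * lorentzian τ x ^ 2 - 8 * τ ^ 2 * x ^ 2 * lorentzian τ x ^ 3| ≤ 8 * lorentzian τ x := by
  have hk := (lorentzian_pos τ x).le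
  have hk1 := lorentzian_le_one τ x
  have hone := lorentzian_add_mul_eq_one τ x
  have hτx : τ ^ 2 * x ^ 2 * lorentzian τ x ≤ 1 := by nlinarith [mul_nonneg (sq_nonneg τ) hk]
  have hkk : lorentzian τ x ^ 2 ≤ lorentzian τ x := by nlinarith
  have hthird : τ ^ 2 * x ^ 2 * lorentzian τ x ^ 3 ≤ lorentzian τ x := by
    calc τ ^ 2 * x ^ 2 * lorentzian τ x ^ 3
        = τ ^ 2 * x ^ 2 * lorentzian τ x * lorentzian τ x ^ 2 := by ring
      _ ≤ 1 * lorentzian τ x ^ 2 := by gcongr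
      _ ≤ lorentzian τ x := by rwa [one_mul]
  have hthird0 : 0 ≤ τ ^ 2 * x ^ 2 * lorentzian τ x ^ 3 := by positivity
  rw [abs_le]
  constructor <;> nlinarith

end Lorentzian

section FourierMajorant

variable {E : Type*} [NormedAddCommGroup E]

/-- The function whose integral controls the `L¹` norm of the Fourier transform of `g`, where `g'`
and `g''` stand for the derivatives of `g`. -/
noncomputable def fourierMajorant (g g' g'' : ℝ → E) (x : ℝ) : ℝ :=
  9 * ((japaneseBracket x)⁻¹ * ‖g x‖) + 4 * ‖g' x‖ + japaneseBracket x * ‖g'' x‖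

variable [NormedSpace ℝ E] {g g' g'' : ℝ → E}

lemma integrable_bdd_smul {h : ℝ → ℝ} {C : ℝ} (hh : Continuous h) (hC : ∀ x, |h x| ≤ C)
    (hi : Integrable g) : Integrable fun x ↦ h x • g x :=
  Integrable.bdd_smul (𝕜 := ℝ) hi C hh.aestronglyMeasurable (.of_forall hC)

lemma integrable_of_japaneseBracket_smul (hi : Integrable fun x ↦ japaneseBracket x • g x) :
    Integrable g := by
  simpa only [inv_smul_smul₀ (japaneseBracket_pos _).ne'] using
    integrable_bdd_smul continuous_japaneseBracket_inv abs_japaneseBracket_inv_le_one hi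

lemma integrable_fourierMajorant (hi : Integrable g) (hi' : Integrable g')
    (hi'' : Integrable fun x ↦ japaneseBracket x • g'' x) :
    Integrable (fourierMajorant g g' g'') := by
  have hi''norm : Integrable fun x ↦ japaneseBracket x * ‖g'' x‖ := by
    simpa only [norm_smul, Real.norm_of_nonneg (japaneseBracket_pos _).le] using hi''.norm
  exact (((integrable_bdd_smul continuous_japaneseBracket_inv abs_japaneseBracket_inv_le_one
    hi.norm).const_mul 9).add (hi'.norm.const_mul 4)).add hi''norm

/-- The second derivative of `x ↦ ⟨x⟩²(1 + τ²⟨x⟩²)⁻¹ g x`, expanded by the Leibniz rule. -/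
noncomputable def lorentzianSecondDeriv (τ : ℝ) (g g' g'' : ℝ → E) (x : ℝ) : E :=
  (2 * lorentzian τ x ^ 2 - 8 * τ ^ 2 * x ^ 2 * lorentzian τ x ^ 3) • g x +
    (2 : ℝ) • (2 * x * lorentzian τ x ^ 2) • g' x +
    ((1 + x ^ 2) * lorentzian τ x) • g'' x

lemma norm_lorentzian_smul_add_norm_lorentzianSecondDeriv_le (τ : ℝ) (g g' g'' : ℝ → E) (x : ℝ) :
    ‖lorentzian τ x • g x‖ + ‖lorentzianSecondDeriv τ g g' g'' x‖ ≤
      japaneseBracket x * lorentzian τ x * fourierMajorant g g' g'' x := by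
  have hw := japaneseBracket_pos x
  have hk := lorentzian_pos τ x
  have hkg : ‖lorentzian τ x • g x‖ = lorentzian τ x * ‖g x‖ := by
    rw [norm_smul, Real.norm_of_nonneg hk.le]
  have hsecond : ‖lorentzianSecondDeriv τ g g' g'' x‖ ≤ 8 * lorentzian τ x * ‖g x‖ +
      2 * (2 * japaneseBracket x * lorentzian τ x * ‖g' x‖) +
      japaneseBracket x ^ 2 * lorentzian τ x * ‖g'' x‖ := by
    refine norm_add₃_le.trans ?_
    rw [← japaneseBracket_sq]
    simp only [norm_smul, Real.norm_eq_abs, abs_two, abs_of_pos (mul_pos (pow_pos hw 2) hk)]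
    gcongr
    · exact abs_lorentzian_second_deriv_le τ x
    · exact abs_two_mul_lorentzian_sq_le τ x
  calc ‖lorentzian τ x • g x‖ + ‖lorentzianSecondDeriv τ g g' g'' x‖
      ≤ lorentzian τ x * ‖g x‖ + _ := add_le_add hkg.le hsecond
    _ = japaneseBracket x * lorentzian τ x * fourierMajorant g g' g'' x := by
        unfold fourierMajorant
        field_simp
        ring

lemma integrable_lorentzian_smul (τ : ℝ) (hi : Integrable g) :
    Integrable fun x ↦ lorentzian τ x • g x :=
  integrable_bdd_smul (continuous_lorentzian_right τ) (fun x ↦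
    (abs_of_pos (lorentzian_pos τ x)).trans_le (lorentzian_le_one τ x)) hi

lemma integrable_sq_mul_lorentzian_smul {τ : ℝ} (hτ : τ ≠ 0) (hi : Integrable g) :
    Integrable fun x ↦ ((1 + x ^ 2) * lorentzian τ x) • g x := by
  have hlor := continuous_lorentzian_right τ
  refine integrable_bdd_smul (C := (τ ^ 2)⁻¹) (by fun_prop) (fun x ↦ ?_) hi
  rw [abs_of_pos (mul_pos (by positivity) (lorentzian_pos τ x)), ← japaneseBracket_sq]
  exact sq_mul_lorentzian_le hτ x

lemma integrable_mul_lorentzian_sq_smul {τ : ℝ} (hτ : τ ≠ 0) (hi : Integrable g) :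
    Integrable fun x ↦ (2 * x * lorentzian τ x ^ 2) • g x := by
  have hlor := continuous_lorentzian_right τ
  refine integrable_bdd_smul (C := 2 * (τ ^ 2)⁻¹) (by fun_prop) (fun x ↦ ?_) hi
  linarith [abs_two_mul_lorentzian_sq_le τ x, mul_lorentzian_le hτ x]

lemma integrable_mul_lorentzian_mul_fourierMajorant {τ : ℝ} (hτ : τ ≠ 0) (hi : Integrable g)
    (hi' : Integrable g') (hi'' : Integrable fun x ↦ japaneseBracket x • g'' x) :
    Integrable fun x ↦ japaneseBracket x * lorentzian τ x * fourierMajorant g g' g'' x := by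
  refine integrable_bdd_smul (C := (τ ^ 2)⁻¹)
    (continuous_japaneseBracket.mul (continuous_lorentzian_right τ)) (fun x ↦ ?_)
    (integrable_fourierMajorant hi hi' hi'')
  rw [abs_of_pos (mul_pos (japaneseBracket_pos x) (lorentzian_pos τ x))]
  exact mul_lorentzian_le hτ x

lemma integrable_lorentzianSecondDeriv {τ : ℝ} (hτ : τ ≠ 0) (hi : Integrable g)
    (hi' : Integrable g') (hi'' : Integrable fun x ↦ japaneseBracket x • g'' x) :
    Integrable (lorentzianSecondDeriv τ g g' g'') := by
  have hlor := continuous_lorentzian_right τ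
  have hmeas : AEStronglyMeasurable (lorentzianSecondDeriv τ g g' g'') :=
    (((Continuous.aestronglyMeasurable (by fun_prop)).smul hi.1).add
      ((integrable_mul_lorentzian_sq_smul hτ hi').1.const_smul 2)).add
      (integrable_sq_mul_lorentzian_smul hτ (integrable_of_japaneseBracket_smul hi'')).1
  refine (integrable_mul_lorentzian_mul_fourierMajorant hτ hi hi' hi'').mono' hmeas
    (.of_forall fun x ↦ ?_)
  exact (le_add_of_nonneg_left (norm_nonneg _)).trans
    (norm_lorentzian_smul_add_norm_lorentzianSecondDeriv_le τ g g' g'' x)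

end FourierMajorant

section Fourier

variable {E : Type*} [NormedAddCommGroup E] [NormedSpace ℂ E] {g g' g'' : ℝ → E}

lemma continuous_fourier_of_integrable (hi : Integrable g) : Continuous (𝓕 g) :=
  VectorFourier.fourierIntegral_continuous Real.continuous_fourierChar
    (by exact continuous_inner) hi

lemma norm_fourier_le_integral_norm (g : ℝ → E) (ξ : ℝ) : ‖𝓕 g ξ‖ ≤ ∫ x, ‖g x‖ :=
  VectorFourier.norm_fourierIntegral_le_integral_norm ..

lemma fourier_add_const_smul {q : ℝ → E} (hi : Integrable g) (hq : Integrable q) (c ξ : ℝ) :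
    𝓕 (fun x ↦ g x + c • q x) ξ = 𝓕 g ξ + c • 𝓕 q ξ := by
  have hsmul := VectorFourier.fourierIntegral_const_smul Real.fourierChar volume
    (innerₗ ℝ) q (c : ℂ)
  have hadd := VectorFourier.fourierIntegral_add Real.continuous_fourierChar
    (L := innerₗ ℝ) (by exact continuous_inner) hi (hq.smul (c : ℂ))
  rw [hsmul] at hadd
  exact congr_fun hadd ξ

lemma fourier_second_deriv (hg : ∀ x, HasDerivAt g (g' x) x) (hg' : ∀ x, HasDerivAt g' (g'' x) x)
    (hi : Integrable g) (hi' : Integrable g') (hi'' : Integrable g'') (ξ : ℝ) :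
    𝓕 g'' ξ = -(2 * Real.pi * ξ) ^ 2 • 𝓕 g ξ := by
  obtain rfl : deriv g = g' := funext fun x ↦ (hg x).deriv
  obtain rfl : deriv (deriv g) = g'' := funext fun x ↦ (hg' x).deriv
  simp only [Real.fourier_deriv hi' (fun x ↦ (hg' x).differentiableAt) hi'',
    Real.fourier_deriv hi (fun x ↦ (hg x).differentiableAt) hi', smul_smul, ← Complex.coe_smul]
  congr 1
  push_cast
  linear_combination (2 * Real.pi * ξ : ℂ) ^ 2 * Complex.I_sq

lemma fourier_lorentzianSecondDeriv (hg : ∀ x, HasDerivAt g (g' x) x)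
    (hg' : ∀ x, HasDerivAt g' (g'' x) x) (hi : Integrable g) (hi' : Integrable g')
    (hi'' : Integrable fun x ↦ japaneseBracket x • g'' x) {τ : ℝ} (hτ : τ ≠ 0) (ξ : ℝ) :
    𝓕 (lorentzianSecondDeriv τ g g' g'') ξ = -(2 * Real.pi * ξ) ^ 2 •
      𝓕 (fun x ↦ ((1 + x ^ 2) * lorentzian τ x) • g x) ξ := by
  have hderiv (x : ℝ) : HasDerivAt (fun x ↦ ((1 + x ^ 2) * lorentzian τ x) • g x)
      (((1 + x ^ 2) * lorentzian τ x) • g' x + (2 * x * lorentzian τ x ^ 2) • g x) x :=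
    (hasDerivAt_sq_mul_lorentzian τ x).smul (hg x)
  have hderiv' (x : ℝ) : HasDerivAt
      (fun x ↦ ((1 + x ^ 2) * lorentzian τ x) • g' x + (2 * x * lorentzian τ x ^ 2) • g x)
      (lorentzianSecondDeriv τ g g' g'' x) x := by
    convert! ((hasDerivAt_sq_mul_lorentzian τ x).smul (hg' x)).add
      ((hasDerivAt_mul_lorentzian_sq τ x).smul (hg x)) using 1
    unfold lorentzianSecondDeriv
    module
  exact fourier_second_deriv hderiv hderiv' (integrable_sq_mul_lorentzian_smul hτ hi)
    ((integrable_sq_mul_lorentzian_smul hτ hi').add (integrable_mul_lorentzian_sq_smul hτ hi))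
    (integrable_lorentzianSecondDeriv hτ hi hi' hi'') ξ

lemma norm_fourier_le_integral_lorentzian (hg : ∀ x, HasDerivAt g (g' x) x)
    (hg' : ∀ x, HasDerivAt g' (g'' x) x) (hi : Integrable g) (hi' : Integrable g')
    (hi'' : Integrable fun x ↦ japaneseBracket x • g'' x) {ξ : ℝ} (hξ : ξ ≠ 0) :
    ‖𝓕 g ξ‖ ≤ ∫ x, japaneseBracket x * lorentzian (2 * Real.pi * ξ) x *
      fourierMajorant g g' g'' x := by
  set τ := 2 * Real.pi * ξ with hτdef
  have hτ : τ ≠ 0 := by positivity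
  have hlow := integrable_lorentzian_smul τ hi
  have hsecond := integrable_lorentzianSecondDeriv hτ hi hi' hi''
  have hsplit : (fun x ↦ lorentzian τ x • g x +
      τ ^ 2 • ((1 + x ^ 2) * lorentzian τ x) • g x) = g := funext fun x ↦ by
    rw [smul_smul, ← add_smul, lorentzian_add_mul_eq_one, one_smul]
  have hfourier : 𝓕 g ξ = 𝓕 (fun x ↦ lorentzian τ x • g x) ξ -
      𝓕 (lorentzianSecondDeriv τ g g' g'') ξ := by
    rw [fourier_lorentzianSecondDeriv hg hg' hi hi' hi'' hτ, ← hτdef, neg_smul, sub_neg_eq_add,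
      ← fourier_add_const_smul hlow (integrable_sq_mul_lorentzian_smul hτ hi), hsplit]
  calc ‖𝓕 g ξ‖ ≤ ‖𝓕 (fun x ↦ lorentzian τ x • g x) ξ‖ +
        ‖𝓕 (lorentzianSecondDeriv τ g g' g'') ξ‖ := hfourier ▸ norm_sub_le _ _
    _ ≤ (∫ x, ‖lorentzian τ x • g x‖) + ∫ x, ‖lorentzianSecondDeriv τ g g' g'' x‖ :=
        add_le_add (norm_fourier_le_integral_norm _ ξ) (norm_fourier_le_integral_norm _ ξ)
    _ = ∫ x, ‖lorentzian τ x • g x‖ + ‖lorentzianSecondDeriv τ g g' g'' x‖ :=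
        (integral_add hlow.norm hsecond.norm).symm
    _ ≤ _ := integral_mono (hlow.norm.add hsecond.norm)
        (integrable_mul_lorentzian_mul_fourierMajorant hτ hi hi' hi'')
        (norm_lorentzian_smul_add_norm_lorentzianSecondDeriv_le τ g g' g'')

end Fourier

section FourierL1

lemma lorentzian_two_pi_mul (ξ x : ℝ) :
    lorentzian (2 * Real.pi * ξ) x = (1 + (2 * Real.pi * japaneseBracket x * ξ) ^ 2)⁻¹ := by
  rw [lorentzian, ← japaneseBracket_sq]
  ring_nf

lemma integrable_japaneseBracket_mul_lorentzian (x : ℝ) :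
    Integrable fun ξ ↦ japaneseBracket x * lorentzian (2 * Real.pi * ξ) x := by
  simp only [lorentzian_two_pi_mul]
  exact (integrable_inv_one_add_sq.comp_mul_left'
    (by positivity [japaneseBracket_pos x])).const_mul _

lemma integral_japaneseBracket_mul_lorentzian (x : ℝ) :
    ∫ ξ, japaneseBracket x * lorentzian (2 * Real.pi * ξ) x = 1 / 2 := by
  have hw := japaneseBracket_pos x
  simp only [lorentzian_two_pi_mul]
  rw [integral_const_mul, Measure.integral_comp_mul_left (fun y ↦ (1 + y ^ 2)⁻¹),
    integral_univ_inv_one_add_sq, abs_of_pos (by positivity), smul_eq_mul]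
  field_simp

variable {M : ℝ → ℝ}

lemma integrable_prod_japaneseBracket_mul_lorentzian_mul (hM : Integrable M) :
    Integrable fun p : ℝ × ℝ ↦
      japaneseBracket p.2 * lorentzian (2 * Real.pi * p.1) p.2 * M p.2 := by
  have hcont : Continuous fun p : ℝ × ℝ ↦
      japaneseBracket p.2 * lorentzian (2 * Real.pi * p.1) p.2 :=
    (continuous_japaneseBracket.comp continuous_snd).mul
      (continuous_lorentzian.comp (f := fun p : ℝ × ℝ ↦ (2 * Real.pi * p.1, p.2)) (by fun_prop))
  refine (integrable_prod_iff' (hcont.aestronglyMeasurable.mul hM.1.comp_snd)).2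
    ⟨.of_forall fun x ↦ (integrable_japaneseBracket_mul_lorentzian x).mul_const (M x), ?_⟩
  have hnorm (x : ℝ) : ∫ ξ, ‖japaneseBracket x * lorentzian (2 * Real.pi * ξ) x * M x‖ =
      1 / 2 * ‖M x‖ := by
    simp only [norm_mul, Real.norm_of_nonneg (japaneseBracket_pos x).le,
      Real.norm_of_nonneg (lorentzian_pos _ x).le]
    rw [integral_mul_const, integral_japaneseBracket_mul_lorentzian]
  simp only [Pi.mul_apply, hnorm]
  exact hM.norm.const_mul _

lemma integral_integral_japaneseBracket_mul_lorentzian_mul (hM : Integrable M) :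
    ∫ ξ, ∫ x, japaneseBracket x * lorentzian (2 * Real.pi * ξ) x * M x = 1 / 2 * ∫ x, M x := by
  rw [integral_integral_swap (integrable_prod_japaneseBracket_mul_lorentzian_mul hM)]
  have hξ (x : ℝ) : ∫ ξ, japaneseBracket x * lorentzian (2 * Real.pi * ξ) x * M x =
      1 / 2 * M x := by
    rw [integral_mul_const, integral_japaneseBracket_mul_lorentzian]
  simp only [hξ, integral_const_mul]

variable {E : Type*} [NormedAddCommGroup E] [NormedSpace ℂ E] {g g' g'' : ℝ → E}

lemma ae_norm_fourier_le_integral_lorentzian (hg : ∀ x, HasDerivAt g (g' x) x)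
    (hg' : ∀ x, HasDerivAt g' (g'' x) x) (hi : Integrable g) (hi' : Integrable g')
    (hi'' : Integrable fun x ↦ japaneseBracket x • g'' x) :
    ∀ᵐ ξ, ‖𝓕 g ξ‖ ≤ ∫ x, japaneseBracket x * lorentzian (2 * Real.pi * ξ) x *
      fourierMajorant g g' g'' x :=
  (Measure.ae_ne volume 0).mono fun _ ↦ norm_fourier_le_integral_lorentzian hg hg' hi hi' hi''

lemma integrable_fourier (hg : ∀ x, HasDerivAt g (g' x) x)
    (hg' : ∀ x, HasDerivAt g' (g'' x) x) (hi : Integrable g) (hi' : Integrable g')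
    (hi'' : Integrable fun x ↦ japaneseBracket x • g'' x) : Integrable (𝓕 g) :=
  (integrable_prod_japaneseBracket_mul_lorentzian_mul
    (integrable_fourierMajorant hi hi' hi'')).integral_prod_left.mono'
    (continuous_fourier_of_integrable hi).aestronglyMeasurable
    (ae_norm_fourier_le_integral_lorentzian hg hg' hi hi' hi'')

lemma integral_norm_fourier_le (hg : ∀ x, HasDerivAt g (g' x) x)
    (hg' : ∀ x, HasDerivAt g' (g'' x) x) (hi : Integrable g) (hi' : Integrable g')
    (hi'' : Integrable fun x ↦ japaneseBracket x • g'' x) :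
    ∫ ξ, ‖𝓕 g ξ‖ ≤ 1 / 2 * ∫ x, fourierMajorant g g' g'' x := by
  have hM := integrable_fourierMajorant hi hi' hi''
  rw [← integral_integral_japaneseBracket_mul_lorentzian_mul hM]
  exact integral_mono_ae (integrable_fourier hg hg' hi hi' hi'').norm
    (integrable_prod_japaneseBracket_mul_lorentzian_mul hM).integral_prod_left
    (ae_norm_fourier_le_integral_lorentzian hg hg' hi hi' hi'')

end FourierL1

section QuasiCommutator

variable {𝒜 : Type*} [CStarAlgebra 𝒜] {A B : 𝒜}

lemma exp_smul_I_smul_mem_unitary (hA : IsSelfAdjoint A) (t : ℝ) :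
    NormedSpace.exp (t • (Complex.I • A)) ∈ unitary 𝒜 := by
  let +nondep : NormedAlgebra ℚ 𝒜 := .restrictScalars ℚ ℂ _
  exact NormedSpace.exp_mem_unitary_of_mem_skewAdjoint
    (skewAdjoint.smul_mem t (hA.smul_mem_skewAdjoint Complex.conj_I))

lemma hasDerivAt_exp_smul_mul_mul_exp_smul_neg (a b J : 𝒜) (t : ℝ) :
    HasDerivAt (fun s : ℝ ↦ NormedSpace.exp (s • a) * J * NormedSpace.exp (s • -b))
      (NormedSpace.exp (t • a) * (a * J - J * b) * NormedSpace.exp (t • -b)) t := by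
  let +nondep : NormedAlgebra ℚ 𝒜 := .restrictScalars ℚ ℂ _
  convert! ((hasDerivAt_exp_smul_const (𝕂 := ℝ) a t).mul_const J).mul
    (hasDerivAt_exp_smul_const' (𝕂 := ℝ) (-b) t) using 1
  noncomm_ring

lemma norm_exp_mul_sub_mul_exp_le (hA : IsSelfAdjoint A) (hB : IsSelfAdjoint B) (J : 𝒜) (t : ℝ) :
    ‖NormedSpace.exp (t • (Complex.I • A)) * J - J * NormedSpace.exp (t • (Complex.I • B))‖ ≤
      |t| * ‖A * J - J * B‖ := by
  let +nondep : NormedAlgebra ℚ 𝒜 := .restrictScalars ℚ ℂ _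
  set a := Complex.I • A with ha
  set b := Complex.I • B with hb
  have hneg_mem (s : ℝ) : NormedSpace.exp (s • -b) ∈ unitary 𝒜 := by
    simpa only [smul_neg, neg_smul] using exp_smul_I_smul_mem_unitary hB (-s)
  have hcomm : a * J - J * b = Complex.I • (A * J - J * B) := by
    rw [ha, hb, smul_mul_assoc, mul_smul_comm, smul_sub]
  have hbound (s : ℝ) :
      ‖NormedSpace.exp (s • a) * (a * J - J * b) * NormedSpace.exp (s • -b)‖ ≤
        ‖A * J - J * B‖ := by
    rw [CStarRing.norm_mul_mem_unitary _ (hneg_mem s),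
      CStarRing.norm_mem_unitary_mul _ (exp_smul_I_smul_mem_unitary hA s), hcomm, norm_smul,
      Complex.norm_I, one_mul]
  have hmvt := convex_univ.norm_image_sub_le_of_norm_hasDerivWithin_le (x := (0 : ℝ)) (y := t)
    (fun s _ ↦ (hasDerivAt_exp_smul_mul_mul_exp_smul_neg a b J s).hasDerivWithinAt)
    (fun s _ ↦ hbound s) (Set.mem_univ _) (Set.mem_univ _)
  have hinv : NormedSpace.exp (t • -b) * NormedSpace.exp (t • b) = 1 := by
    rw [smul_neg, ← NormedSpace.exp_add_of_commute (Commute.refl _).neg_left, neg_add_cancel,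
      NormedSpace.exp_zero]
  calc ‖NormedSpace.exp (t • a) * J - J * NormedSpace.exp (t • b)‖
      = ‖(NormedSpace.exp (t • a) * J * NormedSpace.exp (t • -b) - J) *
          NormedSpace.exp (t • b)‖ := by
        rw [sub_mul, mul_assoc _ _ (NormedSpace.exp _), hinv, mul_one]
    _ = ‖NormedSpace.exp (t • a) * J * NormedSpace.exp (t • -b) - J‖ :=
        CStarRing.norm_mul_mem_unitary _ (exp_smul_I_smul_mem_unitary hB t)
    _ ≤ |t| * ‖A * J - J * B‖ := by simpa [mul_comm] using hmvt

lemma cfc_exp_mul_I_smul (hA : IsSelfAdjoint A) (t : ℝ) (c : ℂ) :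
    cfc (fun z : ℂ ↦ Complex.exp ((t * z.re : ℝ) * Complex.I) • c) A =
      c • NormedSpace.exp (t • (Complex.I • A)) := by
  have hre : cfc (fun z : ℂ ↦ Complex.exp ((t * z.re : ℝ) * Complex.I) • c) A =
      cfc (fun z : ℂ ↦ c • Complex.exp ((t * Complex.I) • z)) A := by
    refine cfc_congr fun z hz ↦ ?_
    rw [smul_eq_mul, smul_eq_mul, smul_eq_mul, mul_comm, Complex.ofReal_mul,
      ← hA.mem_spectrum_eq_re hz, mul_right_comm]
  have hnormal : IsStarNormal A := hA.isStarNormal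
  have hnormal_smul : IsStarNormal ((t * Complex.I) • A) := inferInstance
  rw [hre, cfc_smul c _ A (by fun_prop),
    cfc_comp_smul (t * Complex.I) Complex.exp A (by fun_prop) hnormal,
    CFC.complex_exp_eq_normedSpace_exp hnormal_smul, mul_smul, Complex.coe_smul]

lemma continuous_exp_mul_re_mul_I_smul {F : ℝ → ℂ} (hF : Continuous F) :
    Continuous (Function.uncurry fun (ξ : ℝ) (z : ℂ) ↦
      Complex.exp ((2 * Real.pi * ξ * z.re : ℝ) * Complex.I) • F ξ) := by
  unfold Function.uncurry
  fun_prop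

lemma norm_exp_ofReal_mul_I_smul (t : ℝ) (c : ℂ) : ‖Complex.exp (t * Complex.I) • c‖ = ‖c‖ := by
  rw [norm_smul, Complex.norm_exp_ofReal_mul_I, one_mul]

lemma integrable_smul_exp (hA : IsSelfAdjoint A) {F : ℝ → ℂ} (hF : Continuous F)
    (hFi : Integrable F) :
    Integrable fun ξ ↦ F ξ • NormedSpace.exp ((2 * Real.pi * ξ) • (Complex.I • A)) := by
  simp only [← cfc_exp_mul_I_smul hA]
  exact integrable_cfc _ (fun ξ ↦ ‖F ξ‖) A (continuous_exp_mul_re_mul_I_smul hF).continuousOn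
    (.of_forall fun ξ z _ ↦ (norm_exp_ofReal_mul_I_smul _ _).le) hFi.norm.2 hA.isStarNormal

lemma cfc_fourierInv_eq_integral (hA : IsSelfAdjoint A) {F : ℝ → ℂ} (hF : Continuous F)
    (hFi : Integrable F) {f : ℝ → ℝ} (hf : ∀ x, 𝓕⁻ F x = f x) :
    cfc f A = ∫ ξ, F ξ • NormedSpace.exp ((2 * Real.pi * ξ) • (Complex.I • A)) := by
  have hint (x : ℝ) :
      (f x : ℂ) = ∫ ξ, Complex.exp ((2 * Real.pi * ξ * x : ℝ) * Complex.I) • F ξ := by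
    simp only [← hf, Real.fourierInv_eq', RCLike.inner_apply, conj_trivial, mul_assoc, mul_comm x]
  rw [cfc_real_eq_complex f hA]
  simp only [hint, ← cfc_exp_mul_I_smul hA]
  exact cfc_integral _ (fun ξ ↦ ‖F ξ‖) A (continuous_exp_mul_re_mul_I_smul hF).continuousOn
    (.of_forall fun ξ z _ ↦ (norm_exp_ofReal_mul_I_smul _ _).le) hFi.norm.2 hA.isStarNormal

lemma norm_cfc_mul_sub_mul_cfc_le_integral (hA : IsSelfAdjoint A) (hB : IsSelfAdjoint B) (J : 𝒜)
    {F : ℝ → ℂ} (hF : Continuous F) (hFi : Integrable F)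
    (hFi' : Integrable fun ξ ↦ ‖F ξ‖ * |2 * Real.pi * ξ|) {f : ℝ → ℝ} (hf : ∀ x, 𝓕⁻ F x = f x) :
    ‖cfc f A * J - J * cfc f B‖ ≤
      (∫ ξ, ‖F ξ‖ * |2 * Real.pi * ξ|) * ‖A * J - J * B‖ := by
  have hiA := integrable_smul_exp hA hF hFi
  have hiB := integrable_smul_exp hB hF hFi
  rw [cfc_fourierInv_eq_integral hA hF hFi hf, cfc_fourierInv_eq_integral hB hF hFi hf,
    ← integral_mul_const_of_integrable hiA, ← integral_const_mul_of_integrable hiB,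
    ← integral_sub (hiA.mul_const J) (hiB.const_mul J), ← integral_mul_const]
  refine norm_integral_le_of_norm_le (hFi'.mul_const _) (.of_forall fun ξ ↦ ?_)
  rw [smul_mul_assoc, mul_smul_comm, ← smul_sub, norm_smul, mul_assoc ‖F ξ‖]
  gcongr
  exact norm_exp_mul_sub_mul_exp_le hA hB J _

lemma norm_cfc_mul_sub_mul_cfc_le_integral_fourier (hA : IsSelfAdjoint A) (hB : IsSelfAdjoint B)
    (J : 𝒜) {f : ℝ → ℝ} {f' : ℝ → ℂ} (hf : ∀ x, HasDerivAt (fun x ↦ (f x : ℂ)) (f' x) x)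
    (hi : Integrable fun x ↦ (f x : ℂ)) (hi' : Integrable f')
    (hF : Integrable (𝓕 fun x ↦ (f x : ℂ))) (hF' : Integrable (𝓕 f')) :
    ‖cfc f A * J - J * cfc f B‖ ≤ (∫ ξ, ‖𝓕 f' ξ‖) * ‖A * J - J * B‖ := by
  obtain rfl : deriv (fun x ↦ (f x : ℂ)) = f' := funext fun x ↦ (hf x).deriv
  have hdiff : Differentiable ℝ fun x ↦ (f x : ℂ) := fun x ↦ (hf x).differentiableAt
  have hnorm (ξ : ℝ) : ‖𝓕 (deriv fun x ↦ (f x : ℂ)) ξ‖ =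
      ‖𝓕 (fun x ↦ (f x : ℂ)) ξ‖ * |2 * Real.pi * ξ| := by
    rw [Real.fourier_deriv hi hdiff hi', norm_smul, mul_comm]
    simp
  simp only [hnorm]
  refine norm_cfc_mul_sub_mul_cfc_le_integral hA hB J (continuous_fourier_of_integrable hi) hF
    (by simpa only [hnorm] using hF'.norm) fun x ↦ ?_
  exact congr_fun (hdiff.continuous.fourierInv_fourier_eq hi hF) x

end QuasiCommutator

section SeminormDensity

variable {n : ℕ} {f : ℝ → ℝ}

/-- The integrand `Σ_{l ≤ n} |f^{(l)}(x)| ⟨x⟩^{l-2}` of `Nseminorm n f`, with the two weights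
multiplied out; its summands do not depend on `n`. -/
noncomputable def seminormDensity (n : ℕ) (f : ℝ → ℝ) (x : ℝ) : ℝ :=
  ∑ l ∈ Finset.range (n + 1), |iteratedDeriv l f x| * japaneseBracket x ^ ((l : ℤ) - 2)

lemma Nseminorm_eq_integral (n : ℕ) (f : ℝ → ℝ) :
    Nseminorm n f = ∫ x, seminormDensity n f x := by
  have hzpow (l : ℕ) (x : ℝ) : √(1 + x ^ 2) ^ ((l : ℤ) - n) * √(1 + x ^ 2) ^ ((n : ℤ) - 2) =
      √(1 + x ^ 2) ^ ((l : ℤ) - 2) := by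
    rw [← zpow_add₀ (by positivity), sub_add_sub_cancel]
  simp only [Nseminorm, seminormDensity, japaneseBracket, Finset.sum_mul, mul_assoc, hzpow]

lemma seminormDensity_term_nonneg (f : ℝ → ℝ) (x : ℝ) (l : ℕ) :
    0 ≤ |iteratedDeriv l f x| * japaneseBracket x ^ ((l : ℤ) - 2) :=
  mul_nonneg (abs_nonneg _) (zpow_nonneg (japaneseBracket_pos x).le _)

lemma seminormDensity_nonneg (n : ℕ) (f : ℝ → ℝ) (x : ℝ) : 0 ≤ seminormDensity n f x :=
  Finset.sum_nonneg fun l _ ↦ seminormDensity_term_nonneg f x l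

lemma seminormDensity_mono {m : ℕ} (hmn : m ≤ n) (f : ℝ → ℝ) (x : ℝ) :
    seminormDensity m f x ≤ seminormDensity n f x :=
  Finset.sum_le_sum_of_subset_of_nonneg (Finset.range_mono (by lia))
    fun l _ _ ↦ seminormDensity_term_nonneg f x l

lemma continuous_seminormDensity (hf : ContDiff ℝ n f) : Continuous (seminormDensity n f) := by
  refine continuous_finsetSum _ fun l hl ↦ ?_
  have hln : l ≤ n := Finset.mem_range_succ_iff.1 hl
  exact (hf.continuous_iteratedDeriv l (by exact_mod_cast hln)).abs.mul
    (continuous_japaneseBracket.zpow₀ _ fun x ↦ .inl (japaneseBracket_pos x).ne')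

lemma hasCompactSupport_iteratedDeriv (hs : HasCompactSupport f) (k : ℕ) :
    HasCompactSupport (iteratedDeriv k f) := by
  induction k with
  | zero => rwa [iteratedDeriv_zero]
  | succ k ih => exact iteratedDeriv_succ (f := f) ▸ ih.deriv

lemma integrable_seminormDensity (hf : ContDiff ℝ n f) (hs : HasCompactSupport f) :
    Integrable (seminormDensity n f) := by
  refine (continuous_seminormDensity hf).integrable_of_hasCompactSupport <|
    .intro hs.isCompact fun x hx ↦ Finset.sum_eq_zero fun l _ ↦ ?_
  have hzero : f =ᶠ[nhds x] fun _ ↦ 0 := notMem_tsupport_iff_eventuallyEq.1 hx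
  rw [hzero.iteratedDeriv_eq l, iteratedDeriv_const, ite_self, abs_zero, zero_mul]

lemma integrable_seminormDensity_of_le {m : ℕ} (hmn : m ≤ n) (hf : ContDiff ℝ m f)
    (hi : Integrable (seminormDensity n f)) : Integrable (seminormDensity m f) :=
  hi.mono' (continuous_seminormDensity hf).aestronglyMeasurable <| .of_forall fun x ↦
    (Real.norm_of_nonneg (seminormDensity_nonneg m f x)).trans_le (seminormDensity_mono hmn f x)

lemma Nseminorm_mono {m : ℕ} (hmn : m ≤ n) (hf : ContDiff ℝ m f)
    (hi : Integrable (seminormDensity n f)) : Nseminorm m f ≤ Nseminorm n f := by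
  simp only [Nseminorm_eq_integral]
  exact integral_mono (integrable_seminormDensity_of_le hmn hf hi) hi (seminormDensity_mono hmn f)

end SeminormDensity

section CompactSupport

variable {n k : ℕ} {f : ℝ → ℝ}

/-- The derivative `f^{(k)}` as a complex-valued function, so that its Fourier transform can be
taken. -/
noncomputable def complexIteratedDeriv (k : ℕ) (f : ℝ → ℝ) (x : ℝ) : ℂ :=
  (iteratedDeriv k f x : ℝ)

lemma hasDerivAt_complexIteratedDeriv (hf : ContDiff ℝ n f) (hk : k < n) (x : ℝ) :
    HasDerivAt (complexIteratedDeriv k f) (complexIteratedDeriv (k + 1) f x) x := by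
  have hdiff : Differentiable ℝ (iteratedDeriv k f) :=
    hf.differentiable_iteratedDeriv k (by exact_mod_cast hk)
  rw [complexIteratedDeriv, iteratedDeriv_succ]
  exact (hdiff x).hasDerivAt.ofReal_comp

lemma integrable_japaneseBracket_smul_complexIteratedDeriv (hf : ContDiff ℝ n f)
    (hs : HasCompactSupport f) (hk : k ≤ n) :
    Integrable fun x ↦ japaneseBracket x • complexIteratedDeriv k f x := by
  have hcont : Continuous (complexIteratedDeriv k f) :=
    Complex.continuous_ofReal.comp (hf.continuous_iteratedDeriv k (by exact_mod_cast hk))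
  have hsupp : HasCompactSupport (complexIteratedDeriv k f) :=
    (hasCompactSupport_iteratedDeriv hs k).comp_left Complex.ofReal_zero
  exact (continuous_japaneseBracket.smul hcont).integrable_of_hasCompactSupport hsupp.smul_left

lemma integrable_complexIteratedDeriv (hf : ContDiff ℝ n f) (hs : HasCompactSupport f)
    (hk : k ≤ n) : Integrable (complexIteratedDeriv k f) :=
  integrable_of_japaneseBracket_smul
    (integrable_japaneseBracket_smul_complexIteratedDeriv hf hs hk)

lemma fourierMajorant_le_seminormDensity (f : ℝ → ℝ) (x : ℝ) :
    fourierMajorant (complexIteratedDeriv 1 f) (complexIteratedDeriv 2 f)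
      (complexIteratedDeriv 3 f) x ≤ 9 * seminormDensity 3 f x := by
  have h0 := seminormDensity_term_nonneg f x 0
  have h2 := abs_nonneg (iteratedDeriv 2 f x)
  have h3 := mul_nonneg (japaneseBracket_pos x).le (abs_nonneg (iteratedDeriv 3 f x))
  simp only [fourierMajorant, seminormDensity, complexIteratedDeriv, Complex.norm_real,
    Real.norm_eq_abs, Finset.sum_range_succ, Finset.sum_range_zero]
  norm_num [zpow_neg_one] at h0 ⊢
  linarith

lemma integrable_fourier_complexIteratedDeriv (hf : ContDiff ℝ n f) (hs : HasCompactSupport f)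
    (hk : k + 2 ≤ n) : Integrable (𝓕 (complexIteratedDeriv k f)) :=
  integrable_fourier (hasDerivAt_complexIteratedDeriv hf (by lia))
    (hasDerivAt_complexIteratedDeriv hf (by lia))
    (integrable_complexIteratedDeriv hf hs (by lia))
    (integrable_complexIteratedDeriv hf hs (by lia))
    (integrable_japaneseBracket_smul_complexIteratedDeriv hf hs hk)

lemma integral_norm_fourier_complexIteratedDeriv_one_le (hf : ContDiff ℝ 3 f)
    (hs : HasCompactSupport f) :
    ∫ ξ, ‖𝓕 (complexIteratedDeriv 1 f) ξ‖ ≤ 9 / 2 * Nseminorm 3 f := by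
  have hi (k : ℕ) (hk : k ≤ 3) := integrable_complexIteratedDeriv hf hs hk
  have hi3 := integrable_japaneseBracket_smul_complexIteratedDeriv hf hs le_rfl
  calc ∫ ξ, ‖𝓕 (complexIteratedDeriv 1 f) ξ‖
      ≤ 1 / 2 * ∫ x, fourierMajorant (complexIteratedDeriv 1 f) (complexIteratedDeriv 2 f)
          (complexIteratedDeriv 3 f) x :=
        integral_norm_fourier_le (hasDerivAt_complexIteratedDeriv hf (by simp))
          (hasDerivAt_complexIteratedDeriv hf (by simp)) (hi 1 (by simp)) (hi 2 (by simp)) hi3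
    _ ≤ 1 / 2 * ∫ x, 9 * seminormDensity 3 f x := by
        refine mul_le_mul_of_nonneg_left (integral_mono
          (integrable_fourierMajorant (hi 1 (by simp)) (hi 2 (by simp)) hi3)
          ((integrable_seminormDensity hf hs).const_mul 9)
          (fourierMajorant_le_seminormDensity f)) (by norm_num)
    _ = 9 / 2 * Nseminorm 3 f := by
        rw [integral_const_mul, Nseminorm_eq_integral]
        ring

lemma norm_cfc_mul_sub_mul_cfc_le_of_hasCompactSupport {𝒜 : Type*} [CStarAlgebra 𝒜] {A B : 𝒜}
    (hA : IsSelfAdjoint A) (hB : IsSelfAdjoint B) (J : 𝒜) (hf : ContDiff ℝ 3 f)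
    (hs : HasCompactSupport f) :
    ‖cfc f A * J - J * cfc f B‖ ≤ 9 / 2 * Nseminorm 3 f * ‖A * J - J * B‖ := by
  have hzero : complexIteratedDeriv 0 f = fun x ↦ (f x : ℂ) := by
    simp only [funext_iff, complexIteratedDeriv, iteratedDeriv_zero, implies_true]
  calc ‖cfc f A * J - J * cfc f B‖
      ≤ (∫ ξ, ‖𝓕 (complexIteratedDeriv 1 f) ξ‖) * ‖A * J - J * B‖ :=
        norm_cfc_mul_sub_mul_cfc_le_integral_fourier hA hB J
          (hzero ▸ hasDerivAt_complexIteratedDeriv hf (by simp))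
          (hzero ▸ integrable_complexIteratedDeriv hf hs (by simp))
          (integrable_complexIteratedDeriv hf hs (by simp))
          (hzero ▸ integrable_fourier_complexIteratedDeriv hf hs (by simp))
          (integrable_fourier_complexIteratedDeriv hf hs (by simp))
    _ ≤ 9 / 2 * Nseminorm 3 f * ‖A * J - J * B‖ := by
        gcongr
        exact integral_norm_fourier_complexIteratedDeriv_one_le hf hs

end CompactSupport

section Cutoff

variable {n : ℕ} {f η : ℝ → ℝ} {R : ℝ}

/-- A smooth function that is `1` on `[-R, R]` and `0` outside `[-2R, 2R]`, obtained from one fixed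
bump function by rescaling, so that its derivatives scale like powers of `R⁻¹`. -/
noncomputable def smoothCutoff (R x : ℝ) : ℝ := (default : ContDiffBump (0 : ℝ)) (R⁻¹ * x)

lemma contDiff_smoothCutoff (n : ℕ) (R : ℝ) : ContDiff ℝ n (smoothCutoff R) :=
  (ContDiffBump.contDiff _).comp (contDiff_const.mul contDiff_id)

lemma hasCompactSupport_smoothCutoff (hR : R ≠ 0) : HasCompactSupport (smoothCutoff R) :=
  (ContDiffBump.hasCompactSupport (default : ContDiffBump (0 : ℝ))).comp_homeomorph
    (Homeomorph.mulLeft₀ R⁻¹ (inv_ne_zero hR))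

lemma smoothCutoff_eq_one (hR : 0 < R) {x : ℝ} (hx : |x| ≤ R) : smoothCutoff R x = 1 := by
  refine ContDiffBump.one_of_mem_closedBall _ (mem_closedBall_zero_iff.2 ?_)
  rw [norm_mul, norm_inv, Real.norm_of_nonneg hR.le, Real.norm_eq_abs, inv_mul_le_iff₀ hR]
  exact hx.trans_eq (mul_one R).symm

lemma exists_abs_iteratedDeriv_smoothCutoff_le (k : ℕ) : ∃ K, ∀ R, 1 ≤ R → ∀ x,
    |iteratedDeriv k (smoothCutoff R) x| * japaneseBracket x ^ k ≤ K := by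
  set χ : ContDiffBump (0 : ℝ) := default
  have hcont : Continuous fun x ↦ iteratedDeriv k χ x * japaneseBracket x ^ k :=
    ((χ.contDiff (n := k)).continuous_iteratedDeriv' k).mul (continuous_japaneseBracket.pow k)
  obtain ⟨K, hK⟩ := (hasCompactSupport_iteratedDeriv χ.hasCompactSupport k).mul_right
    |>.exists_bound_of_continuous hcont
  refine ⟨K, fun R hR x ↦ ?_⟩
  have hR0 : 0 < R := one_pos.trans_le hR
  have hw := japaneseBracket_pos (R⁻¹ * x)
  have hscale : iteratedDeriv k (smoothCutoff R) x = R⁻¹ ^ k * iteratedDeriv k χ (R⁻¹ * x) :=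
    congr_fun (iteratedDeriv_comp_const_mul χ.contDiff R⁻¹) x
  calc |iteratedDeriv k (smoothCutoff R) x| * japaneseBracket x ^ k
      ≤ R⁻¹ ^ k * |iteratedDeriv k χ (R⁻¹ * x)| * (R * japaneseBracket (R⁻¹ * x)) ^ k := by
        rw [hscale, abs_mul, abs_of_pos (by positivity)]
        gcongr
        · exact (japaneseBracket_pos x).le
        · exact japaneseBracket_le_mul hR x
    _ = ‖iteratedDeriv k χ (R⁻¹ * x) * japaneseBracket (R⁻¹ * x) ^ k‖ := by
        have hRk : R⁻¹ ^ k * R ^ k = 1 := by rw [← mul_pow, inv_mul_cancel₀ hR0.ne', one_pow]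
        rw [Real.norm_eq_abs, abs_mul, abs_of_pos (pow_pos hw k)]
        linear_combination
          |iteratedDeriv k χ (R⁻¹ * x)| * japaneseBracket (R⁻¹ * x) ^ k * hRk
    _ ≤ K := hK _

/-- The constant with which multiplication by `η` acts on `seminormDensity n` if
`|η^{(k)}| ≤ K k ⟨x⟩^{-k}` for all `k`. -/
noncomputable def leibnizConst (n : ℕ) (K : ℕ → ℝ) : ℝ :=
  ∑ l ∈ Finset.range (n + 1), ∑ i ∈ Finset.range (l + 1), l.choose i * K (l - i)

lemma seminormDensity_mul_le {K : ℕ → ℝ} (hf : ContDiff ℝ n f) (hη : ContDiff ℝ n η) {x : ℝ}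
    (hK : ∀ k, |iteratedDeriv k η x| * japaneseBracket x ^ k ≤ K k) :
    seminormDensity n (fun x ↦ f x * η x) x ≤ leibnizConst n K * seminormDensity n f x := by
  have hw := japaneseBracket_pos x
  simp only [leibnizConst, Finset.sum_mul]
  refine Finset.sum_le_sum fun l hl ↦ ?_
  have hln : (l : ℕ∞ω) ≤ n := by exact_mod_cast Finset.mem_range_succ_iff.1 hl
  rw [iteratedDeriv_fun_mul (hf.of_le hln).contDiffAt (hη.of_le hln).contDiffAt]
  refine (mul_le_mul_of_nonneg_right (Finset.abs_sum_le_sum_abs _ _) (zpow_nonneg hw.le _)).trans ?_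
  rw [Finset.sum_mul]
  refine Finset.sum_le_sum fun i hi ↦ ?_
  have hil : i ≤ l := Finset.mem_range_succ_iff.1 hi
  have hsplit : japaneseBracket x ^ ((l : ℤ) - 2) =
      japaneseBracket x ^ (l - i) * japaneseBracket x ^ ((i : ℤ) - 2) := by
    rw [← zpow_natCast, ← zpow_add₀ hw.ne', Nat.cast_sub hil, sub_add_sub_cancel]
  have hterm : |iteratedDeriv i f x| * japaneseBracket x ^ ((i : ℤ) - 2) ≤ seminormDensity n f x :=
    Finset.single_le_sum
      (f := fun j : ℕ ↦ |iteratedDeriv j f x| * japaneseBracket x ^ ((j : ℤ) - 2))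
      (fun j _ ↦ seminormDensity_term_nonneg f x j)
      (Finset.mem_range_succ_iff.2 (hil.trans (Finset.mem_range_succ_iff.1 hl)))
  calc |l.choose i * iteratedDeriv i f x * iteratedDeriv (l - i) η x| *
        japaneseBracket x ^ ((l : ℤ) - 2)
      = l.choose i * (|iteratedDeriv (l - i) η x| * japaneseBracket x ^ (l - i)) *
          (|iteratedDeriv i f x| * japaneseBracket x ^ ((i : ℤ) - 2)) := by
        rw [hsplit, abs_mul, abs_mul, Nat.abs_cast]
        ring
    _ ≤ l.choose i * K (l - i) * seminormDensity n f x := by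
        have := seminormDensity_term_nonneg f x i
        have hK0 : 0 ≤ K (l - i) := le_trans (by positivity) (hK (l - i))
        gcongr
        exact hK _

lemma eventually_seminormDensity_mul_smoothCutoff_eq (n : ℕ) (f : ℝ → ℝ) (x : ℝ) :
    ∀ᶠ R in Filter.atTop,
      seminormDensity n (fun x ↦ f x * smoothCutoff R x) x = seminormDensity n f x := by
  filter_upwards [Filter.eventually_gt_atTop |x|] with R hR
  have heq : (fun x ↦ f x * smoothCutoff R x) =ᶠ[nhds x] f := by
    filter_upwards [continuous_abs.continuousAt.eventually_lt continuousAt_const hR] with y hy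
    rw [smoothCutoff_eq_one ((abs_nonneg y).trans_lt hy) hy.le, mul_one]
  simp only [seminormDensity, heq.iteratedDeriv_eq]

lemma tendsto_Nseminorm_mul_smoothCutoff (hf : ContDiff ℝ n f)
    (hi : Integrable (seminormDensity n f)) :
    Filter.Tendsto (fun R ↦ Nseminorm n fun x ↦ f x * smoothCutoff R x) Filter.atTop
      (nhds (Nseminorm n f)) := by
  choose K hK using exists_abs_iteratedDeriv_smoothCutoff_le
  simp only [Nseminorm_eq_integral]
  refine tendsto_integral_filter_of_dominated_convergence
    (fun x ↦ leibnizConst n K * seminormDensity n f x)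
    (.of_forall fun R ↦
      (continuous_seminormDensity (hf.mul (contDiff_smoothCutoff n R))).aestronglyMeasurable)
    ?_ (hi.const_mul _) (.of_forall fun x ↦ .congr' ?_ tendsto_const_nhds)
  · filter_upwards [Filter.eventually_ge_atTop 1] with R hR
    refine .of_forall fun x ↦ ?_
    rw [Real.norm_of_nonneg (seminormDensity_nonneg ..)]
    exact seminormDensity_mul_le hf (contDiff_smoothCutoff n R) fun k ↦ hK k R hR x
  · filter_upwards [eventually_seminormDensity_mul_smoothCutoff_eq n f x] with R hR using hR.symm

lemma eventually_cfc_mul_smoothCutoff_eq {𝒜 : Type*} [CStarAlgebra 𝒜] (f : ℝ → ℝ) (A : 𝒜) :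
    ∀ᶠ R in Filter.atTop, cfc (fun x ↦ f x * smoothCutoff R x) A = cfc f A := by
  filter_upwards [Filter.eventually_gt_atTop 0,
    Filter.eventually_ge_atTop (‖A‖ * ‖(1 : 𝒜)‖)] with R hR0 hR
  refine cfc_congr fun x hx ↦ ?_
  have hxR : |x| ≤ R := (spectrum.norm_le_norm_mul_of_mem hx).trans hR
  exact (congrArg (f x * ·) (smoothCutoff_eq_one hR0 hxR)).trans (mul_one _)

end Cutoff

theorem quasi_commutator_functional_bound_general {𝒜 : Type*} [CStarAlgebra 𝒜] {n : ℕ}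
    (hn : 3 ≤ n) {A B : 𝒜} (hA : IsSelfAdjoint A) (hB : IsSelfAdjoint B) (J : 𝒜) {f : ℝ → ℝ}
    (hf : ContDiff ℝ n f) (hi : Integrable (seminormDensity n f)) :
    ‖cfc f A * J - J * cfc f B‖ ≤ 9 / 2 * Nseminorm n f * ‖A * J - J * B‖ := by
  have hf3 : ContDiff ℝ 3 f := hf.of_le (by exact_mod_cast hn)
  have hi3 : Integrable (seminormDensity 3 f) := integrable_seminormDensity_of_le hn hf3 hi
  have hcutoff : ∀ᶠ R in Filter.atTop, ‖cfc f A * J - J * cfc f B‖ ≤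
      9 / 2 * Nseminorm 3 (fun x ↦ f x * smoothCutoff R x) * ‖A * J - J * B‖ := by
    filter_upwards [Filter.eventually_ne_atTop 0, eventually_cfc_mul_smoothCutoff_eq f A,
      eventually_cfc_mul_smoothCutoff_eq f B] with R hR hRA hRB
    rw [← hRA, ← hRB]
    exact norm_cfc_mul_sub_mul_cfc_le_of_hasCompactSupport hA hB J
      (hf3.mul (contDiff_smoothCutoff 3 R))
      (hasCompactSupport_smoothCutoff hR).mul_left
  have hlim := ((tendsto_Nseminorm_mul_smoothCutoff hf3 hi3).const_mul (9 / 2)).mul_const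
    ‖A * J - J * B‖
  calc ‖cfc f A * J - J * cfc f B‖ ≤ 9 / 2 * Nseminorm 3 f * ‖A * J - J * B‖ :=
        ge_of_tendsto hlim hcutoff
    _ ≤ 9 / 2 * Nseminorm n f * ‖A * J - J * B‖ := by
        gcongr
        exact Nseminorm_mono hn hf3 hi

/-- For `n ≥ 3` there is a constant `C = C(n)` such that for all bounded self-adjoint
operators `A, B`, every bounded operator `J` on a complex Hilbert space, and every
compactly supported `f ∈ Cⁿ(ℝ)`, one has `‖f(A)J − Jf(B)‖ ≤ C N_n(f) ‖AJ − JB‖`. -/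
theorem quasi_commutator_functional_bound (n : ℕ) (hn : 3 ≤ n) :
    ∃ C : ℝ, ∀ (H : Type*) [NormedAddCommGroup H] [InnerProductSpace ℂ H] [CompleteSpace H]
      (A B J : H →L[ℂ] H) (f : ℝ → ℝ),
      IsSelfAdjoint A → IsSelfAdjoint B →
      ContDiff ℝ n f → HasCompactSupport f →
      ‖cfc f A * J - J * cfc f B‖ ≤ C * Nseminorm n f * ‖A * J - J * B‖ :=
  ⟨9 / 2, fun _ _ _ _ _ _ J _ hA hB hf hs ↦ quasi_commutator_functional_bound_general hn hA hB J hf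
    (integrable_seminormDensity hf hs)⟩
end
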